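/- arXiv:2109.12064 — 3 statements merged into one kernel-verified Lean document; each statement's English description precedes it below -/
import Mathlib

section
/- Let H ≤ G be finitely generated groups with H undistorted in G. Let Λ and Γ be Cayley graphs for H and G with respect to finite generating sets, and let i : Λ → Γ be the quasi-isometric embedding corresponding to the inclusion H ↪ G. Then the following are equivalent: (1) H is relatively wide in G; (2) for every C ≥ 1 there exists K = K(C) ≥ 1 such that, for every C-quasi-geodesic α : [−r, r] → Γ with α(±r) ∈ H and r > K, the points α(±r) are joined by an edge path γ ⊆ Γ that is disjoint from the ball B_Γ(α(0), r/K) and has length |γ| ≤ K·r; (3) there exists K₀ ≥ 1 such that, for every geodesic β : [−r, r] → Λ with r > K₀, the points i∘β(±r) are joined by an edge path γ ⊆ Γ that is disjoint from the ball B_Γ(i∘β(0), r/K₀) and has length |γ| ≤ K₀·r. -/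
/-!
The three conditions are compared through *detours*: edge paths of `Cay(G, S)` that avoid a
ball about a point `z` and have controlled length (`Detour`).

Detours of linear length around balls of linear radius are the finite-scale counterpart of
connectedness in an asymptotic cone punctured at `z`. If `x` and `y` lie in a connected subset
of the punctured cone, then they are joined by detours at scale `s n` for `ω`-almost all `n`,
because "joined by detours" is an equivalence relation with open classes
(`coneDetour_of_preconnected`). Conversely, detours at scale `s n` converge to a Lipschitz path
in the punctured cone (`exists_preconnected_of_coneDetour`).

(1) ⇒ (2): quasi-geodesics violating (2) with worse and worse constants, rescaled by their
half-lengths, give a cone whose basepoint separates two limit points of `H`; the detours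
produced by relative wideness contradict the choice of the quasi-geodesics
(`qg_bypass_of_relativelyWide`).

(2) ⇒ (3): since `H` is undistorted, geodesics of `H` are uniform quasi-geodesics of `G`
(`isQG_of_geodSeg`).

(3) ⇒ (1): given two limit points `x`, `y` of `H` and a point `z` distinct from both, join
`x n` to `y n` by a geodesic of `H`. If it stays linearly far from `z n`, it is a detour.
Otherwise some vertex of it is close to `z n`; that vertex is linearly far from both ends, so
(3) bypasses a long subsegment centred at it, and the rest of the geodesic is far from `z n`
by undistortion (`exists_detour_of_bypass`, `relativelyWide_of_bypass`).
-/

open Set Filter Topology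
open scoped ENNReal

namespace MorseGoG

/-! ## Metric notions relative to an explicit distance function

Throughout, distances are given by an explicit function `d : X → X → ℝ`, so that the same
notions apply to metric spaces (`d = dist`), to groups with word metrics, and to subgroups
with their own word metrics. -/

variable {X : Type*}

/-- `γ` is a `C`-quasi-geodesic on the parameter set `I ⊆ ℝ` with respect to `d`:
`C ≥ 1` and `|s−t|/C − C ≤ d (γ s) (γ t) ≤ C|s−t| + C` for all `s, t ∈ I`. -/
def IsQG (d : X → X → ℝ) (C : ℝ) (I : Set ℝ) (γ : ℝ → X) : Prop :=
  1 ≤ C ∧ ∀ s ∈ I, ∀ t ∈ I,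
    |s - t| / C - C ≤ d (γ s) (γ t) ∧ d (γ s) (γ t) ≤ C * |s - t| + C

/-- `x` lies in the (closed) `r`-neighbourhood of `A` with respect to `d`. -/
def InNbhd (d : X → X → ℝ) (A : Set X) (r : ℝ) (x : X) : Prop :=
  ∃ a ∈ A, d x a ≤ r

/-- The set `A` (e.g. the image of a quasi-geodesic) is `N`-Morse with respect to `d`:
every `C`-quasi-geodesic segment with endpoints on `A` is contained in the
`N C`-neighbourhood of `A`. -/
def MorseSet (d : X → X → ℝ) (N : ℝ → ℝ) (A : Set X) : Prop :=
  ∀ C : ℝ, 1 ≤ C → ∀ a b : ℝ, a ≤ b → ∀ α : ℝ → X,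
    IsQG d C (Set.Icc a b) α → α a ∈ A → α b ∈ A →
    ∀ t ∈ Set.Icc a b, InNbhd d A (N C) (α t)

/-- `A` is Morse: it is `N`-Morse for some Morse gauge `N`. -/
def IsMorse (d : X → X → ℝ) (A : Set X) : Prop := ∃ N : ℝ → ℝ, MorseSet d N A

/-- A discrete geodesic ray: the sequence of vertices of a geodesic ray in a graph. -/
def IsGeodSeq (d : X → X → ℝ) (γ : ℕ → X) : Prop :=
  ∀ m n : ℕ, d (γ m) (γ n) = |(m : ℝ) - (n : ℝ)|

/-- A discrete geodesic segment of length `n`. -/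
def IsGeodSeg (d : X → X → ℝ) (n : ℕ) (γ : ℕ → X) : Prop :=
  ∀ i ≤ n, ∀ j ≤ n, d (γ i) (γ j) = |(i : ℝ) - (j : ℝ)|

/-- A discrete `C`-quasi-geodesic ray. -/
def IsQGSeq (d : X → X → ℝ) (C : ℝ) (γ : ℕ → X) : Prop :=
  1 ≤ C ∧ ∀ m n : ℕ,
    |(m : ℝ) - n| / C - C ≤ d (γ m) (γ n) ∧ d (γ m) (γ n) ≤ C * |(m : ℝ) - n| + C

/-- Two sets are at finite Hausdorff distance with respect to `d`. -/
def BddHD (d : X → X → ℝ) (A B : Set X) : Prop :=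
  ∃ r : ℝ, (∀ a ∈ A, InNbhd d B r a) ∧ (∀ b ∈ B, InNbhd d A r b)

/-- A discrete edge path with `n` steps: consecutive points are at distance at most `1`
(i.e. equal or joined by an edge, in a graph whose vertex set carries the metric `d`). -/
def IsEdgePath (d : X → X → ℝ) (n : ℕ) (c : ℕ → X) : Prop :=
  ∀ i < n, d (c i) (c (i + 1)) ≤ 1

/-- Combinatorial divergence of a discrete ray `γ` in a graph with vertex distance `d`:
the infimum, over `s ≥ r` and over edge paths joining `γ (s - r)` to `γ (s + r)` and
avoiding the ball of radius `ε·r` around `γ s`, of the length of the path. -/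
noncomputable def gdivergence (d : X → X → ℝ) (γ : ℕ → X) (r : ℕ) (ε : ℝ) : ℝ≥0∞ :=
  ⨅ (s : ℕ) (_ : r ≤ s) (n : ℕ) (c : ℕ → X) (_ : IsEdgePath d n c)
    (_ : c 0 = γ (s - r)) (_ : c n = γ (s + r))
    (_ : ∀ i ≤ n, ε * r < d (c i) (γ s)), (n : ℝ≥0∞)

/-! ## Geodesic metric spaces, geodesic rays, divergence -/

variable {Y : Type*} [MetricSpace Y]

/-- A geodesic metric space: any two points are joined by an isometrically parametrised path. -/
def IsGeodesicSpace (Y : Type*) [MetricSpace Y] : Prop :=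
  ∀ x y : Y, ∃ γ : ℝ → Y, γ 0 = x ∧ γ (dist x y) = y ∧
    ∀ s ∈ Set.Icc 0 (dist x y), ∀ t ∈ Set.Icc 0 (dist x y), dist (γ s) (γ t) = |s - t|

/-- A geodesic ray (defined on `[0,∞)` and extended constantly to negative times). -/
def IsGeodRay (γ : ℝ → Y) : Prop :=
  (∀ s t : ℝ, 0 ≤ s → 0 ≤ t → dist (γ s) (γ t) = |s - t|) ∧ ∀ t : ℝ, γ t = γ (max t 0)

theorem IsGeodRay.lipschitz {γ : ℝ → Y} (h : IsGeodRay γ) : LipschitzWith 1 γ := by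
  apply LipschitzWith.of_dist_le_mul
  intro s t
  rw [h.2 s, h.2 t, h.1 _ _ (le_max_right s 0) (le_max_right t 0)]
  rw [NNReal.coe_one, one_mul, Real.dist_eq]
  exact abs_max_sub_max_le_abs s t 0

/-- Divergence function `δ_γ(r, ε)` of a quasi-geodesic ray `γ` in a metric space:
the infimum of lengths (total variations) of paths connecting `γ (s - r)` to `γ (s + r)`
outside the closed ball `B(γ s, εr)`, over all `s ≥ r`. -/
noncomputable def divergence (γ : ℝ → Y) (r ε : ℝ) : ℝ≥0∞ :=
  ⨅ (s : ℝ) (_ : r ≤ s) (c : ℝ → Y) (_ : ContinuousOn c (Set.Icc 0 1))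
    (_ : c 0 = γ (s - r)) (_ : c 1 = γ (s + r))
    (_ : ∀ t ∈ Set.Icc (0 : ℝ) 1, ε * r < dist (c t) (γ s)),
    eVariationOn c (Set.Icc 0 1)

/-- Quasi-isometric embedding between sets carrying explicit distance functions. -/
def IsQIEmb {Z W : Type*} (dZ : Z → Z → ℝ) (dW : W → W → ℝ) (f : Z → W) : Prop :=
  ∃ C : ℝ, 1 ≤ C ∧ ∀ z z' : Z,
    dZ z z' / C - C ≤ dW (f z) (f z') ∧ dW (f z) (f z') ≤ C * dZ z z' + C

/-! ## The Morse boundary of a proper geodesic metric space -/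

/-- A Morse geodesic ray based at `p` in the metric space `Y`. -/
structure MRay (Y : Type*) [MetricSpace Y] (p : Y) where
  ray : ℝ → Y
  base : ray 0 = p
  geod : IsGeodRay ray
  morse : IsMorse dist (Set.range ray)

/-- Two rays are identified when they are at finite Hausdorff distance. -/
def mrayRel (p : Y) (x y : MRay Y p) : Prop :=
  BddHD dist (Set.range x.ray) (Set.range y.ray)

/-- The Morse boundary of a metric space, as a set: Morse geodesic rays based at `p`,
modulo finite Hausdorff distance. -/
def MorseBoundarySp (Y : Type*) [MetricSpace Y] (p : Y) : Type _ := Quot (mrayRel p)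

/-- The `N`-Morse stratum: `N`-Morse geodesic rays based at `p`. -/
def NRaysSp (Y : Type*) [MetricSpace Y] (p : Y) (N : ℝ → ℝ) : Type _ :=
  {γ : MRay Y p // MorseSet dist N (Set.range γ.ray)}

/-- Each stratum of rays carries the compact-open topology (as a set of continuous maps). -/
noncomputable instance NRaysSp.instTop (p : Y) (N : ℝ → ℝ) : TopologicalSpace (NRaysSp Y p N) :=
  TopologicalSpace.induced
    (fun γ => (⟨γ.1.ray, γ.1.geod.lipschitz.continuous⟩ : C(ℝ, Y))) inferInstance

/-- The Morse boundary carries the direct limit topology over all Morse gauges: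
a set is open iff its intersection with each stratum `∂_M^N Y_p` is open there. -/
noncomputable instance MorseBoundarySp.instTop (p : Y) :
    TopologicalSpace (MorseBoundarySp Y p) :=
  ⨆ N : ℝ → ℝ,
    TopologicalSpace.coinduced (fun γ : NRaysSp Y p N => Quot.mk (mrayRel p) γ.1) inferInstance

/-- The relative Morse boundary `(∂_M Y, f)` of a quasi-isometric embedding `f : Y → X`:
classes of Morse rays of `Y` whose image under `f` is Morse in `X`.  It is a subset of
`∂_M Y` (and carries the subspace topology). -/
def relBoundarySp {Y X : Type*} [MetricSpace Y] [MetricSpace X] (p : Y) (f : Y → X) :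
    Set (MorseBoundarySp Y p) :=
  {ξ | ∃ γ : MRay Y p, Quot.mk (mrayRel p) γ = ξ ∧ IsMorse dist (f '' Set.range γ.ray)}

/-! ## Word metrics and Morse boundaries of finitely generated groups -/

variable {G : Type*} [Group G]

/-- Word length of `g` with respect to the (symmetrised) alphabet `S`. -/
noncomputable def wordLength (S : Set G) (g : G) : ℕ :=
  sInf {n : ℕ | ∃ l : List G, l.length = n ∧ (∀ x ∈ l, x ∈ S ∨ x⁻¹ ∈ S) ∧ l.prod = g}

/-- Word metric on `G` with respect to `S`; this is the distance between vertices in the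
Cayley graph `Cay(G, S)`. -/
noncomputable def wdist (S : Set G) (g h : G) : ℝ := wordLength S (g⁻¹ * h)

/-- A Morse geodesic ray in the Cayley graph of `(G, S)`, based at the identity,
recorded by its sequence of vertices. -/
structure GRay (G : Type*) [Group G] (S : Set G) where
  seq : ℕ → G
  base : seq 0 = 1
  geod : IsGeodSeq (wdist S) seq
  morse : IsMorse (wdist S) (Set.range seq)

/-- Identification of rays at finite Hausdorff distance. -/
def grayRel (S : Set G) (x y : GRay G S) : Prop :=
  BddHD (wdist S) (Set.range x.seq) (Set.range y.seq)

/-- The Morse boundary `∂_M G` of the group `G` with finite generating set `S`. -/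
def MorseBoundary (G : Type*) [Group G] (S : Set G) : Type _ := Quot (grayRel (G := G) S)

/-- The stratum of `N`-Morse rays. -/
def NGRays (G : Type*) [Group G] (S : Set G) (N : ℝ → ℝ) : Type _ :=
  {γ : GRay G S // MorseSet (wdist S) N (Set.range γ.seq)}

/-- The compact-open topology on a stratum: for rays in a graph (vertex sequences) this is
the topology of pointwise convergence of the vertex sequences, `G` being discrete. -/
noncomputable instance NGRays.instTop (S : Set G) (N : ℝ → ℝ) :
    TopologicalSpace (NGRays G S N) :=
  TopologicalSpace.induced (fun γ => γ.1.seq)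
    (@Pi.topologicalSpace ℕ (fun _ => G) (fun _ => ⊥))

/-- The direct limit topology on the Morse boundary of a group. -/
noncomputable instance MorseBoundary.instTop (S : Set G) :
    TopologicalSpace (MorseBoundary G S) :=
  ⨆ N : ℝ → ℝ,
    TopologicalSpace.coinduced (fun γ : NGRays G S N => Quot.mk (grayRel S) γ.1) inferInstance

/-! ## Subgroups: undistortion, relative Morse boundaries -/

/-- `H` is finitely generated and undistorted in `(G, S)`: it has a finite generating set
whose word metric is bi-Lipschitz equivalent (suitably, quasi-isometric) to the metric
induced from `G`. -/
def FGUndistorted (S : Set G) (H : Subgroup G) : Prop :=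
  ∃ T : Finset H, Subgroup.closure (T : Set H) = ⊤ ∧
    ∃ C : ℝ, 1 ≤ C ∧ ∀ h h' : H,
      wdist (T : Set H) h h' ≤ C * wdist S (h : G) (h' : G) + C ∧
      wdist S (h : G) (h' : G) ≤ C * wdist (T : Set H) h h' + C

/-- The relative Morse boundary of `H` in `G` is empty, `(∂_M H, G) = ∅`:
no Morse geodesic ray of `H` (w.r.t. any finite generating set of `H`) remains Morse in `G`. -/
def RelMorseEmpty (S : Set G) (H : Subgroup G) : Prop :=
  ∀ T : Finset H, Subgroup.closure (T : Set H) = ⊤ →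
    ∀ γ : ℕ → H, IsGeodSeq (wdist (T : Set H)) γ →
      IsMorse (wdist (T : Set H)) (Set.range γ) →
      ¬ IsMorse (wdist S) (Set.range fun n => (γ n : G))

/-- The image of the natural injection `(∂_M H, G) ↪ ∂_M G`: those classes in `∂_M G`
having a representative ray staying at bounded distance from `H`. -/
def relBdryImage (S : Set G) (H : Subgroup G) : Set (MorseBoundary G S) :=
  {ξ | ∃ γ : GRay G S, Quot.mk (grayRel S) γ = ξ ∧
        ∃ r : ℝ, ∀ n : ℕ, ∃ h ∈ H, wdist S (γ.seq n) h ≤ r}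

/-- The relative Morse boundary `(∂_M H, G)` as a subset of `∂_M H` (where `∂_M H` is
formed w.r.t. a generating set `T` of `H`): classes of rays that remain Morse in `G`. -/
def relBdryIn (S : Set G) (H : Subgroup G) (T : Set H) : Set (MorseBoundary H T) :=
  {ξ | ∃ γ : GRay H T, Quot.mk (grayRel T) γ = ξ ∧
        IsMorse (wdist S) (Set.range fun n => (γ.seq n : G))}

/-- Specification of the natural map `∂_M H → ∂_M G` (or of its restriction to the relative
boundary): each class is sent to the class of a ray of `G` at finite Hausdorff distance
from the image of (a representative of) the given class. -/
def InclSpec (S : Set G) (H : Subgroup G) (TH : Set H)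
    (F : MorseBoundary H TH → MorseBoundary G S) : Prop :=
  ∀ γ : GRay H TH, ∀ β : GRay G S,
    Quot.mk (grayRel S) β = F (Quot.mk (grayRel TH) γ) →
    BddHD (wdist S) (Set.range fun n => ((γ.seq n : G))) (Set.range β.seq)

/-! ## Asymptotic cones and relatively wide subgroups -/

/-- Admissible sequences for an asymptotic cone: sequences at bounded rescaled distance
from the basepoints `o`. -/
def conePts (ω : Ultrafilter ℕ) (d : X → X → ℝ) (o : ℕ → X) (s : ℕ → ℝ) : Set (ℕ → X) :=
  {x | ∃ B : ℝ, ∀ᶠ n in (ω : Filter ℕ), d (o n) (x n) ≤ B * s n}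

/-- The pseudo-distance of the asymptotic cone: ultralimit of the rescaled distances. -/
noncomputable def coneDist (ω : Ultrafilter ℕ) (d : X → X → ℝ) (s : ℕ → ℝ)
    (x y : ℕ → X) : ℝ :=
  limUnder (ω : Filter ℕ) (fun n => d (x n) (y n) / s n)

/-- The topology of the asymptotic cone, as a topology on representative sequences:
generated by the open balls of the cone pseudo-distance. -/
noncomputable def coneTop (ω : Ultrafilter ℕ) (d : X → X → ℝ) (o : ℕ → X) (s : ℕ → ℝ) :
    TopologicalSpace (ℕ → X) :=
  TopologicalSpace.generateFrom
    {U | ∃ c ∈ conePts ω d o s, ∃ ε : ℝ, 0 < ε ∧ U = {x | coneDist ω d s c x < ε}}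

/-- `z` is a cut point of the asymptotic cone separating the points `x` and `y`:
`x, y` differ from `z` and do not lie in a common connected subset of the complement
of (the point represented by) `z`. -/
def ConeSeparates (ω : Ultrafilter ℕ) (d : X → X → ℝ) (o : ℕ → X) (s : ℕ → ℝ)
    (x y z : ℕ → X) : Prop :=
  coneDist ω d s x z ≠ 0 ∧ coneDist ω d s y z ≠ 0 ∧
  ¬ ∃ A : Set (ℕ → X),
      A ⊆ {w ∈ conePts ω d o s | coneDist ω d s w z ≠ 0} ∧ x ∈ A ∧ y ∈ A ∧
      @IsPreconnected (ℕ → X) (coneTop ω d o s) A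

/-- `H` is relatively wide in `(G, S)`: in every asymptotic cone of `G` (over a
non-principal ultrafilter, arbitrary basepoints and scaling factors tending to infinity),
no two limit points of `H` are separated by a cut point. -/
def RelativelyWide (S : Set G) (H : Subgroup G) : Prop :=
  ∀ ω : Ultrafilter ℕ, (ω : Filter ℕ) ≤ Filter.cofinite →
  ∀ (o : ℕ → G) (s : ℕ → ℝ), (∀ n, 0 < s n) → Tendsto s atTop atTop →
  ∀ x y z : ℕ → G, (∀ n, x n ∈ H) → (∀ n, y n ∈ H) →
    x ∈ conePts ω (wdist S) o s → y ∈ conePts ω (wdist S) o s →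
    z ∈ conePts ω (wdist S) o s →
    ¬ ConeSeparates ω (wdist S) o s x y z

/-- The subgroup `H ≤ V` is relatively wide in `V` (for any, equivalently some, finite
generating set of `V`). -/
def RelWideIn (V H : Subgroup G) : Prop :=
  ∀ SV : Finset V, Subgroup.closure (SV : Set V) = ⊤ →
    RelativelyWide (SV : Set V) (H.subgroupOf V)

/-! ## Actions on simplicial trees -/

variable {VT : Type*}

/-- `G` splits as a graph of groups: it acts on the simplicial tree `T`
(preserving adjacency), minimally, non-elliptically and without inversions. -/
def ActsOnTree (G : Type*) [Group G] {VT : Type*} (T : SimpleGraph VT) [MulAction G VT] :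
    Prop :=
  T.IsTree ∧
  (∀ (g : G) (a b : VT), T.Adj a b → T.Adj (g • a) (g • b)) ∧
  (∀ (g : G) (a b : VT), T.Adj a b → ¬(g • a = b ∧ g • b = a)) ∧
  (¬ ∃ v : VT, ∀ g : G, g • v = v) ∧
  (∀ W : Set VT, W.Nonempty → (∀ (g : G), ∀ v ∈ W, g • v ∈ W) →
    (∀ a ∈ W, ∀ b ∈ W, ∀ c : VT, T.dist a c + T.dist c b = T.dist a b → c ∈ W) →
    W = Set.univ)

/-- The stabiliser of the edge `{a, b}` (pointwise; for actions without inversions this is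
the full edge stabiliser). -/
def edgeStab (G : Type*) [Group G] {VT : Type*} [MulAction G VT] (a b : VT) : Subgroup G :=
  MulAction.stabilizer G a ⊓ MulAction.stabilizer G b

/-- The halfspace determined by the edge `{a, b}` containing `b`: one of the two connected
components of the complement of the open edge. -/
def halfspace {VT : Type*} (T : SimpleGraph VT) (a b : VT) : Set VT :=
  {v | T.dist v b < T.dist v a}

end MorseGoG

namespace MorseGoG

variable {G : Type*} [Group G] {VT : Type*}

/-- A choice of "edge subgraphs" `Γ(𝔢) ⊆ Γ` of the Cayley graph `Γ = Cay(G, S)`, one for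
each (unoriented) edge of the tree `T`, recorded by its vertex set `A a b ⊆ G`,
satisfying the properties of Lemma 3.2 (`AIS lem`).  Here `p` is the fixed base vertex of
`T` and `f_p(g) = g • p` is the orbit map. -/
structure EdgeSubgraphs (G : Type*) [Group G] (S : Set G) {VT : Type*} (T : SimpleGraph VT)
    [MulAction G VT] (p : VT) where
  /-- the vertex set of `Γ(𝔢)` for the edge `𝔢 = {a, b}` -/
  A : VT → VT → Set G
  /-- `Γ(𝔢)` only depends on the unoriented edge -/
  symm : ∀ a b : VT, A a b = A b a
  /-- (1) `Γ(𝔢)` is connected -/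
  conn : ∀ a b : VT, T.Adj a b → ∀ x ∈ A a b, ∀ y ∈ A a b,
    ∃ (n : ℕ) (c : ℕ → G), IsEdgePath (wdist S) n c ∧ c 0 = x ∧ c n = y ∧
      ∀ i ≤ n, c i ∈ A a b
  /-- (1) `Γ(𝔢)` is `G_𝔢`-invariant -/
  inva : ∀ a b : VT, T.Adj a b → ∀ g ∈ edgeStab G a b, ∀ x ∈ A a b, g * x ∈ A a b
  /-- (1) `Γ(𝔢)` is `G_𝔢`-cocompact -/
  cocpt : ∀ a b : VT, T.Adj a b →
    ∃ F : Finset G, ∀ x ∈ A a b, ∃ g ∈ edgeStab G a b, ∃ f ∈ F, x = g * f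
  /-- (2) equivariance: `Γ(g𝔢) = gΓ(𝔢)` -/
  equivariant : ∀ (g : G) (a b : VT), A (g • a) (g • b) = (fun x => g * x) '' A a b
  /-- (3) `Γ(𝔢)` contains every edge of `Γ` with one endpoint in `f_p⁻¹(𝔥)` and the other
  in `f_p⁻¹(𝔥*)` -/
  crossing : ∀ a b : VT, T.Adj a b → ∀ x y : G, wdist S x y = 1 →
    x • p ∈ halfspace T a b → y • p ∈ halfspace T b a → x ∈ A a b ∧ y ∈ A a b
  /-- (4) `N(f_p⁻¹(𝔥), r) ∩ N(f_p⁻¹(𝔥*), r) ⊆ N(Γ(𝔢), r)` -/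
  nbhd : ∀ a b : VT, T.Adj a b → ∀ r : ℝ, 0 ≤ r → ∀ x : G,
    (∃ y : G, y • p ∈ halfspace T a b ∧ wdist S x y ≤ r) →
    (∃ y : G, y • p ∈ halfspace T b a ∧ wdist S x y ≤ r) →
    ∃ z ∈ A a b, wdist S x z ≤ r
  /-- (5) each edge of `Γ` lies in `Γ(𝔢)` for only finitely many edges `𝔢` of `T` -/
  finmany : ∀ x y : G, wdist S x y = 1 →
    {e : VT × VT | T.Adj e.1 e.2 ∧ x ∈ A e.1 e.2 ∧ y ∈ A e.1 e.2}.Finite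

/-- The vertex set of `Γ(𝔥)` for the halfspace `𝔥` of the edge `{a,b}` containing `b`:
`f_p⁻¹(𝔥) ∖ Γ(𝔢)`. -/
def hsVerts (T : SimpleGraph VT) [MulAction G VT] (p : VT)
    (A : VT → VT → Set G) (a b : VT) : Set G :=
  {g : G | g • p ∈ halfspace T a b ∧ g ∉ A a b}

/-- `M(𝔥) ⊆ ∂_M G`: classes of rays eventually contained in `Γ(𝔥)`, for the halfspace `𝔥`
of the edge `{a,b}` containing `b`. -/
def Mset (S : Set G) (T : SimpleGraph VT) [MulAction G VT] (p : VT)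
    (A : VT → VT → Set G) (a b : VT) : Set (MorseBoundary G S) :=
  {ξ | ∃ γ : GRay G S, Quot.mk (grayRel S) γ = ξ ∧
        ∃ n₀ : ℕ, ∀ n ≥ n₀, γ.seq n ∈ hsVerts T p A a b}

end MorseGoG

namespace MorseGoG

variable {G : Type*} [Group G]

/-! ### Word metrics -/

theorem wordLength_prod_le (S : Set G) (l : List G) (hl : ∀ x ∈ l, x ∈ S ∨ x⁻¹ ∈ S) :
    wordLength S l.prod ≤ l.length :=
  Nat.sInf_le ⟨l, rfl, hl, rfl⟩

theorem exists_word {S : Set G} (hS : Subgroup.closure S = ⊤) (g : G) :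
    ∃ l : List G, l.length = wordLength S g ∧ (∀ x ∈ l, x ∈ S ∨ x⁻¹ ∈ S) ∧ l.prod = g := by
  have hne : {n : ℕ | ∃ l : List G, l.length = n ∧ (∀ x ∈ l, x ∈ S ∨ x⁻¹ ∈ S) ∧
      l.prod = g}.Nonempty := by
    have hg : g ∈ (Subgroup.closure S).toSubmonoid := by simp [hS]
    rw [Subgroup.closure_toSubmonoid] at hg
    obtain ⟨l, hl, hp⟩ := Submonoid.exists_list_of_mem_closure hg
    exact ⟨l.length, l, rfl, fun x hx => by simpa using hl x hx, hp⟩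
  exact Nat.sInf_mem hne

theorem wordLength_one (S : Set G) : wordLength S (1 : G) = 0 :=
  Nat.le_zero.1 (wordLength_prod_le S [] (by simp))

theorem wordLength_mul_le {S : Set G} (hS : Subgroup.closure S = ⊤) (g h : G) :
    wordLength S (g * h) ≤ wordLength S g + wordLength S h := by
  obtain ⟨l, hl, hlS, rfl⟩ := exists_word hS g
  obtain ⟨k, hk, hkS, rfl⟩ := exists_word hS h
  rw [← hl, ← hk, ← List.length_append, ← List.prod_append]
  refine wordLength_prod_le S _ fun x hx => ?_
  rcases List.mem_append.1 hx with h | h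
  exacts [hlS x h, hkS x h]

theorem wordLength_inv_le {S : Set G} (hS : Subgroup.closure S = ⊤) (g : G) :
    wordLength S g⁻¹ ≤ wordLength S g := by
  obtain ⟨l, hl, hlS, rfl⟩ := exists_word hS g
  rw [← hl, List.prod_inv_reverse]
  refine (wordLength_prod_le S _ fun x hx => ?_).trans (by simp)
  simp only [List.mem_reverse, List.mem_map] at hx
  obtain ⟨y, hy, rfl⟩ := hx
  simpa using (hlS y hy).symm

theorem wdist_self (S : Set G) (g : G) : wdist S g g = 0 := by
  simp [wdist, wordLength_one]

theorem wdist_nonneg (S : Set G) (g h : G) : 0 ≤ wdist S g h := Nat.cast_nonneg _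

theorem wdist_comm {S : Set G} (hS : Subgroup.closure S = ⊤) (g h : G) :
    wdist S g h = wdist S h g := by
  have key : ∀ a b : G, wdist S a b ≤ wdist S b a := fun a b => by
    have h1 := wordLength_inv_le hS (b⁻¹ * a)
    rw [mul_inv_rev, inv_inv] at h1
    exact Nat.cast_le.2 h1
  exact le_antisymm (key g h) (key h g)

theorem wdist_triangle {S : Set G} (hS : Subgroup.closure S = ⊤) (a b c : G) :
    wdist S a c ≤ wdist S a b + wdist S b c := by
  have h1 := wordLength_mul_le hS (a⁻¹ * b) (b⁻¹ * c)
  rw [show a⁻¹ * b * (b⁻¹ * c) = a⁻¹ * c by group] at h1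
  unfold wdist
  exact_mod_cast h1

/-- Cayley graphs are geodesic: a word of minimal length spelling `g⁻¹ * h` traces out a
geodesic from `g` to `h`. -/
theorem exists_geodSeg {S : Set G} (hS : Subgroup.closure S = ⊤) (g h : G) :
    ∃ (n : ℕ) (c : ℕ → G), c 0 = g ∧ c n = h ∧ (n : ℝ) = wdist S g h ∧
      IsGeodSeg (wdist S) n c := by
  obtain ⟨l, hl, hlS, hp⟩ := exists_word hS (g⁻¹ * h)
  set c : ℕ → G := fun i => g * (l.take i).prod with hc
  have c0 : c 0 = g := by simp [hc]
  have cn : c l.length = h := by simp [hc, hp]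
  have hn : (l.length : ℝ) = wdist S g h := by rw [hl, wdist]
  have up : ∀ i j, i ≤ j → wdist S (c i) (c j) ≤ (j : ℝ) - i := by
    intro i j hij
    have e : (c i)⁻¹ * c j = ((l.take j).drop i).prod := by
      have h2 := List.prod_take_mul_prod_drop (l.take j) i
      rw [List.take_take, min_eq_left hij] at h2
      simp only [hc, mul_inv_rev]
      rw [← h2]; group
    have h3 := wordLength_prod_le S ((l.take j).drop i)
      fun x hx => hlS x (List.mem_of_mem_take (List.mem_of_mem_drop hx))
    rw [wdist, e, ← Nat.cast_sub hij]
    refine Nat.cast_le.2 (h3.trans ?_)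
    simp only [List.length_drop, List.length_take]
    omega
  have main : ∀ i j, i ≤ j → j ≤ l.length → wdist S (c i) (c j) = (j : ℝ) - i := by
    intro i j hij hj
    refine le_antisymm (up i j hij) ?_
    have h1 := up 0 i (Nat.zero_le _)
    have h2 := up j l.length hj
    rw [c0] at h1
    rw [cn] at h2
    have h3 := wdist_triangle hS g (c i) h
    have h4 := wdist_triangle hS (c i) (c j) h
    push_cast at h1
    linarith
  refine ⟨l.length, c, c0, cn, hn, fun i hi j hj => ?_⟩
  rcases le_total i j with hij | hij
  · have : (i : ℝ) ≤ j := by exact_mod_cast hij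
    rw [main i j hij hj, abs_sub_comm, abs_of_nonneg (by linarith)]
  · have : (j : ℝ) ≤ i := by exact_mod_cast hij
    rw [wdist_comm hS, main j i hij hi, abs_of_nonneg (by linarith)]

/-- The inclusion of a finitely generated subgroup is Lipschitz for the word metrics. -/
theorem exists_lipschitz_incl {S : Set G} (hS : Subgroup.closure S = ⊤) (H : Subgroup G)
    (TH : Finset H) (hTH : Subgroup.closure (TH : Set H) = ⊤) :
    ∃ M : ℝ, 1 ≤ M ∧ ∀ h h' : H,
      wdist S (h : G) (h' : G) ≤ M * wdist (TH : Set H) h h' := by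
  set M : ℕ := TH.sup (fun t => wordLength S (t : G)) + 1 with hM
  have hlist : ∀ l : List H, (∀ x ∈ l, x ∈ (TH : Set H) ∨ x⁻¹ ∈ (TH : Set H)) →
      wordLength S ((l.prod : H) : G) ≤ M * l.length := by
    intro l
    induction l with
    | nil => intro _; simp [wordLength_one]
    | cons a l ih =>
      intro hl
      have hb : ∀ t ∈ TH, wordLength S (t : G) ≤ M := fun t ht =>
        (Finset.le_sup (f := fun t : H => wordLength S (t : G)) ht).trans (Nat.le_succ _)
      have ha : wordLength S (a : G) ≤ M := by
        rcases hl a (by simp) with h | h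
        · exact hb a (by simpa using h)
        · have h1 := wordLength_inv_le hS ((a⁻¹ : H) : G)
          rw [Subgroup.coe_inv, inv_inv] at h1
          exact h1.trans (by simpa using hb a⁻¹ (by simpa using h))
      have hi := ih fun x hx => hl x (by simp [hx])
      have h2 := wordLength_mul_le hS (a : G) ((l.prod : H) : G)
      rw [List.prod_cons, Subgroup.coe_mul, List.length_cons, mul_add, mul_one]
      omega
  refine ⟨M, by exact_mod_cast Nat.le_add_left 1 _, fun h h' => ?_⟩
  obtain ⟨l, hl, hlS, hp⟩ := exists_word hTH (h⁻¹ * h')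
  have h1 := hlist l hlS
  rw [hp, hl] at h1
  unfold wdist
  exact_mod_cast h1

/-! ### Detours -/

/-- `x` and `y` are joined by an edge path of length at most `N` avoiding the closed ball
of radius `D` about `z`. -/
def Detour (S : Set G) (z : G) (D N : ℝ) (x y : G) : Prop :=
  ∃ (n : ℕ) (c : ℕ → G), IsEdgePath (wdist S) n c ∧ c 0 = x ∧ c n = y ∧ (n : ℝ) ≤ N ∧
    ∀ i ≤ n, D < wdist S (c i) z

theorem Detour.mono {S : Set G} {z x y : G} {D D' N N' : ℝ} (h : Detour S z D N x y)
    (hD : D' ≤ D) (hN : N ≤ N') : Detour S z D' N' x y := by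
  obtain ⟨n, c, h1, h2, h3, h4, h5⟩ := h
  exact ⟨n, c, h1, h2, h3, h4.trans hN, fun i hi => hD.trans_lt (h5 i hi)⟩

theorem Detour.trans {S : Set G} {z x y w : G} {D N N' : ℝ} (h : Detour S z D N x y)
    (h' : Detour S z D N' y w) : Detour S z D (N + N') x w := by
  obtain ⟨n, c, h1, h2, h3, h4, h5⟩ := h
  obtain ⟨m, e, k1, k2, k3, k4, k5⟩ := h'
  refine ⟨n + m, fun i => if i ≤ n then c i else e (i - n), ?_, ?_, ?_, ?_, ?_⟩
  · intro i hi
    rcases lt_trichotomy i n with h | h | h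
    · simp only [h.le, if_true, show i + 1 ≤ n from h]
      exact h1 i h
    · subst h
      simp only [le_refl, if_true, show ¬ (i + 1 ≤ i) by omega, if_false,
        Nat.add_sub_cancel_left]
      rw [h3, ← k2]
      exact k1 0 (by omega)
    · simp only [show ¬ (i ≤ n) by omega, show ¬ (i + 1 ≤ n) by omega, if_false]
      rw [show i + 1 - n = i - n + 1 by omega]
      exact k1 _ (by omega)
  · simpa using h2
  · rcases Nat.eq_zero_or_pos m with h | h
    · subst h
      simp only [add_zero, le_refl, if_true]
      rw [h3, ← k2, k3]
    · simp only [show ¬ (n + m ≤ n) by omega, if_false, Nat.add_sub_cancel_left, k3]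
  · push_cast; linarith
  · intro i hi
    by_cases h : i ≤ n
    · simpa only [h, if_true] using h5 i h
    · simpa only [h, if_false] using k5 _ (by omega)

theorem Detour.symm {S : Set G} (hS : Subgroup.closure S = ⊤) {z x y : G} {D N : ℝ}
    (h : Detour S z D N x y) : Detour S z D N y x := by
  obtain ⟨n, c, h1, h2, h3, h4, h5⟩ := h
  refine ⟨n, fun i => c (n - i), fun i hi => ?_, by simpa using h3, by simpa using h2, h4,
    fun i _ => h5 _ (by omega)⟩
  have h6 := h1 (n - (i + 1)) (by omega)
  rw [show n - (i + 1) + 1 = n - i by omega, wdist_comm hS] at h6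
  exact h6

/-- A geodesic from `x` that is too short to reach the ball about `z` is a detour. -/
theorem detour_of_lt {S : Set G} (hS : Subgroup.closure S = ⊤) {z x y : G} {D : ℝ}
    (h : D + wdist S x y < wdist S x z) : Detour S z D (wdist S x y) x y := by
  obtain ⟨n, c, c0, cn, hn, hc⟩ := exists_geodSeg hS x y
  refine ⟨n, c, fun i hi => ?_, c0, cn, hn.le, fun i hi => ?_⟩
  · rw [hc i hi.le (i + 1) hi]
    simp
  · have h1 := hc 0 (Nat.zero_le _) i hi
    rw [c0] at h1
    simp only [Nat.cast_zero, zero_sub, abs_neg, Nat.abs_cast] at h1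
    have h2 := wdist_triangle hS x (c i) z
    have h3 : (i : ℝ) ≤ n := by exact_mod_cast hi
    linarith

/-- A coarse path with steps of length at most `M` that stays outside the `(D + M)`-ball
about `z` can be refined to an edge path staying outside the `D`-ball. -/
theorem detour_of_coarse {S : Set G} (hS : Subgroup.closure S = ⊤) {z : G} {D M : ℝ}
    (p : ℕ → G) (k : ℕ) (hM : ∀ i < k, wdist S (p i) (p (i + 1)) ≤ M)
    (hz : ∀ i ≤ k, D + M < wdist S (p i) z) (hM0 : 0 ≤ M) :
    Detour S z D (M * k) (p 0) (p k) := by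
  induction k with
  | zero =>
    have h := hz 0 le_rfl
    exact (detour_of_lt hS (y := p 0) (D := D) (z := z)
      (by rw [wdist_self]; linarith)).mono le_rfl (by simp [wdist_self])
  | succ k ih =>
    have h1 := ih (fun i hi => hM i (by omega)) (fun i hi => hz i (by omega))
    have h2 := hM k (by omega)
    have h3 := hz k (by omega)
    have h4 := detour_of_lt hS (x := p k) (y := p (k + 1)) (D := D) (z := z) (by linarith)
    refine (h1.trans h4).mono le_rfl ?_
    push_cast; linarith

end MorseGoG

namespace MorseGoG

variable {G : Type*} [Group G]

/-! ### Detours and connectedness in asymptotic cones -/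

theorem tendsto_coneDist {S : Set G} (hS : Subgroup.closure S = ⊤) {ω : Ultrafilter ℕ}
    {o : ℕ → G} {s : ℕ → ℝ} (hs : ∀ n, 0 < s n) {x y : ℕ → G}
    (hx : x ∈ conePts ω (wdist S) o s) (hy : y ∈ conePts ω (wdist S) o s) :
    Tendsto (fun n => wdist S (x n) (y n) / s n) (ω : Filter ℕ)
      (𝓝 (coneDist ω (wdist S) s x y)) := by
  obtain ⟨B, hB⟩ := hx
  obtain ⟨B', hB'⟩ := hy
  refine tendsto_nhds_limUnder ?_
  have hmem : ((ω.map fun n => wdist S (x n) (y n) / s n : Ultrafilter ℝ) : Filter ℝ) ≤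
      𝓟 (Icc 0 (B + B')) := by
    rw [le_principal_iff, Ultrafilter.coe_map, mem_map]
    filter_upwards [hB, hB'] with n h1 h2
    refine ⟨div_nonneg (wdist_nonneg _ _ _) (hs n).le, (div_le_iff₀ (hs n)).2 ?_⟩
    have h3 := wdist_triangle hS (x n) (o n) (y n)
    rw [wdist_comm hS (x n) (o n)] at h3
    linarith
  obtain ⟨a, -, ha⟩ := isCompact_Icc.ultrafilter_le_nhds _ hmem
  exact ⟨a, ha⟩

/-- The relation on sequences given by detours around `z` at linear scale: for `ω`-almost
all `n`, the points `x n` and `y n` are joined by a path of length `O(s n)` staying at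
distance `≥ δ * s n` from `z n`. -/
def ConeDetour (S : Set G) (ω : Ultrafilter ℕ) (s : ℕ → ℝ) (z x y : ℕ → G) : Prop :=
  ∃ L δ : ℝ, 0 < δ ∧ ∀ᶠ n in (ω : Filter ℕ), Detour S (z n) (δ * s n) (L * s n) (x n) (y n)

theorem ConeDetour.trans {S : Set G} {ω : Ultrafilter ℕ} {s : ℕ → ℝ} (hs : ∀ n, 0 < s n)
    {z x y w : ℕ → G} (h : ConeDetour S ω s z x y) (h' : ConeDetour S ω s z y w) :
    ConeDetour S ω s z x w := by
  obtain ⟨L, δ, hδ, h⟩ := h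
  obtain ⟨L', δ', hδ', h'⟩ := h'
  refine ⟨L + L', min δ δ', lt_min hδ hδ', ?_⟩
  filter_upwards [h, h'] with n h1 h2
  have e1 := mul_le_mul_of_nonneg_right (min_le_left δ δ') (hs n).le
  have e2 := mul_le_mul_of_nonneg_right (min_le_right δ δ') (hs n).le
  exact ((h1.mono e1 le_rfl).trans (h2.mono e2 le_rfl)).mono le_rfl (by linarith)

theorem ConeDetour.symm {S : Set G} (hS : Subgroup.closure S = ⊤) {ω : Ultrafilter ℕ}
    {s : ℕ → ℝ} {z x y : ℕ → G} (h : ConeDetour S ω s z x y) : ConeDetour S ω s z y x := by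
  obtain ⟨L, δ, hδ, h⟩ := h
  exact ⟨L, δ, hδ, h.mono fun n hn => hn.symm hS⟩

theorem coneDetour_of_lt {S : Set G} (hS : Subgroup.closure S = ⊤) {ω : Ultrafilter ℕ}
    {o : ℕ → G} {s : ℕ → ℝ} (hs : ∀ n, 0 < s n) {x y z : ℕ → G}
    (hx : x ∈ conePts ω (wdist S) o s) (hy : y ∈ conePts ω (wdist S) o s)
    (hz : z ∈ conePts ω (wdist S) o s)
    (hlt : coneDist ω (wdist S) s x y < coneDist ω (wdist S) s x z) :
    ConeDetour S ω s z x y := by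
  set u := coneDist ω (wdist S) s x y with hu
  set v := coneDist ω (wdist S) s x z with hv
  refine ⟨u + (v - u) / 4, (v - u) / 4, by linarith, ?_⟩
  filter_upwards [(tendsto_coneDist hS hs hx hy).eventually_lt_const
      (show u < u + (v - u) / 4 by linarith),
    (tendsto_coneDist hS hs hx hz).eventually_const_lt
      (show v - (v - u) / 4 < v by linarith)] with n h1 h2
  rw [div_lt_iff₀ (hs n)] at h1
  rw [lt_div_iff₀ (hs n)] at h2
  refine (detour_of_lt hS ?_).mono le_rfl h1.le
  have := mul_pos (show 0 < (v - u) / 4 by linarith) (hs n)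
  have e : v - (v - u) / 4 = (u + (v - u) / 4) + (v - u) / 4 + (v - u) / 4 := by ring
  rw [e, add_mul, add_mul] at h2
  linarith

/-- Being joined by a detour is an equivalence relation with open classes on the complement
of `z` in the cone, so it relates any two points of a connected set. -/
theorem coneDetour_of_preconnected {S : Set G} (hS : Subgroup.closure S = ⊤)
    {ω : Ultrafilter ℕ} {o : ℕ → G} {s : ℕ → ℝ} (hs : ∀ n, 0 < s n) {x y z : ℕ → G}
    (hz : z ∈ conePts ω (wdist S) o s) {A : Set (ℕ → G)}
    (hA : A ⊆ {w ∈ conePts ω (wdist S) o s | coneDist ω (wdist S) s w z ≠ 0})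
    (hx : x ∈ A) (hy : y ∈ A)
    (hconn : @IsPreconnected (ℕ → G) (coneTop ω (wdist S) o s) A) :
    ConeDetour S ω s z x y := by
  let : TopologicalSpace (ℕ → G) := coneTop ω (wdist S) o s
  refine IsPreconnected.induction₂ hconn (ConeDetour S ω s z) (fun p hp => ?_)
    (fun _ _ _ _ _ _ h h' => h.trans hs h') (fun _ _ _ _ h => h.symm hS) hx hy
  obtain ⟨hpc, hpz⟩ := hA hp
  have hpos : 0 < coneDist ω (wdist S) s p z :=
    lt_of_le_of_ne (ge_of_tendsto' (tendsto_coneDist hS hs hpc hz)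
      fun n => div_nonneg (wdist_nonneg _ _ _) (hs n).le) (Ne.symm hpz)
  have hopen : IsOpen {q | coneDist ω (wdist S) s p q < coneDist ω (wdist S) s p z} :=
    TopologicalSpace.isOpen_generateFrom_of_mem ⟨p, hpc, _, hpos, rfl⟩
  have hpp : coneDist ω (wdist S) s p p = 0 :=
    tendsto_nhds_unique (tendsto_coneDist hS hs hpc hpc) (by simp [wdist_self])
  have hball := hopen.mem_nhds
    (show p ∈ {q | coneDist ω (wdist S) s p q < coneDist ω (wdist S) s p z} by
      simpa [hpp] using hpos)
  filter_upwards [mem_nhdsWithin_of_mem_nhds hball, self_mem_nhdsWithin] with q hq hqA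
  exact coneDetour_of_lt hS hs hpc (hA hqA).1 hz hq

theorem wdist_le_of_edgePath {S : Set G} (hS : Subgroup.closure S = ⊤) {n : ℕ} {c : ℕ → G}
    (hc : IsEdgePath (wdist S) n c) {i j : ℕ} (hi : i ≤ n) (hj : j ≤ n) :
    wdist S (c i) (c j) ≤ |(i : ℝ) - j| := by
  have key : ∀ k i : ℕ, i + k ≤ n → wdist S (c i) (c (i + k)) ≤ k := by
    intro k
    induction k with
    | zero => intro i _; simp [wdist_self]
    | succ k ih =>
      intro i hik
      have h1 := ih i (by omega)
      have h2 := hc (i + k) (by omega)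
      have h3 := wdist_triangle hS (c i) (c (i + k)) (c (i + k + 1))
      push_cast
      rw [← add_assoc]
      linarith
  rcases le_total i j with h | h
  · obtain ⟨k, rfl⟩ := Nat.exists_eq_add_of_le h
    have := key k i hj
    push_cast
    simpa using this
  · obtain ⟨k, rfl⟩ := Nat.exists_eq_add_of_le h
    have := key k j hi
    rw [wdist_comm hS]
    push_cast
    simpa using this

theorem abs_natFloor_sub_le {a b : ℝ} (ha : 0 ≤ a) (hb : 0 ≤ b) :
    |(⌊a⌋₊ : ℝ) - ⌊b⌋₊| ≤ |a - b| + 1 := by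
  have h1 := Nat.floor_le ha
  have h2 := Nat.lt_floor_add_one a
  have h3 := Nat.floor_le hb
  have h4 := Nat.lt_floor_add_one b
  have h5 := le_abs_self (a - b)
  have h6 := neg_abs_le (a - b)
  rw [abs_le]
  constructor <;> linarith

/-- The rescaled detour paths, parametrised proportionally on `[0, 1]`, converge to a
Lipschitz path in the cone which avoids `z`; its image is the required connected set. -/
theorem exists_preconnected_of_coneDetour {S : Set G} (hS : Subgroup.closure S = ⊤)
    {ω : Ultrafilter ℕ} (hω : (ω : Filter ℕ) ≤ cofinite) {o : ℕ → G} {s : ℕ → ℝ}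
    (hs : ∀ n, 0 < s n) (hs' : Tendsto s atTop atTop) {x y z : ℕ → G}
    (hx : x ∈ conePts ω (wdist S) o s) (hz : z ∈ conePts ω (wdist S) o s)
    (h : ConeDetour S ω s z x y) :
    ∃ A : Set (ℕ → G),
      A ⊆ {w ∈ conePts ω (wdist S) o s | coneDist ω (wdist S) s w z ≠ 0} ∧ x ∈ A ∧ y ∈ A ∧
      @IsPreconnected (ℕ → G) (coneTop ω (wdist S) o s) A := by
  obtain ⟨L, δ, hδ, hd⟩ := h
  have hsω : Tendsto s (ω : Filter ℕ) atTop :=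
    hs'.mono_left (by rwa [Nat.cofinite_eq_atTop] at hω)
  -- For the `ω`-negligible bad indices an arbitrary sequence from `x n` to `y n` is used.
  have hex : ∀ n, ∃ (N : ℕ) (c : ℕ → G), c 0 = x n ∧ c N = y n ∧
      (Detour S (z n) (δ * s n) (L * s n) (x n) (y n) →
        IsEdgePath (wdist S) N c ∧ (N : ℝ) ≤ L * s n ∧
          ∀ i ≤ N, δ * s n < wdist S (c i) (z n)) := by
    intro n
    by_cases hn : Detour S (z n) (δ * s n) (L * s n) (x n) (y n)
    · obtain ⟨N, c, h1, h2, h3, h4, h5⟩ := hn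
      exact ⟨N, c, h2, h3, fun _ => ⟨h1, h4, h5⟩⟩
    · exact ⟨1, fun i => if i = 0 then x n else y n, by simp, by simp, fun h => absurd h hn⟩
  choose N c c0 cN hc using hex
  set F : Icc (0 : ℝ) 1 → ℕ → G := fun t n => c n ⌊(t : ℝ) * N n⌋₊ with hF
  have hfl : ∀ (t : Icc (0 : ℝ) 1) (n : ℕ), ⌊(t : ℝ) * N n⌋₊ ≤ N n := fun t n =>
    Nat.floor_le_of_le (mul_le_of_le_one_left (Nat.cast_nonneg _) t.2.2)
  have hFd : ∀ t t' : Icc (0 : ℝ) 1, ∀ᶠ n in (ω : Filter ℕ),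
      wdist S (F t n) (F t' n) ≤ |(t : ℝ) - t'| * L * s n + 1 := by
    intro t t'
    filter_upwards [hd] with n hn
    obtain ⟨h1, h2, -⟩ := hc n hn
    refine (wdist_le_of_edgePath hS h1 (hfl t n) (hfl t' n)).trans
      ((abs_natFloor_sub_le (mul_nonneg t.2.1 (Nat.cast_nonneg _))
        (mul_nonneg t'.2.1 (Nat.cast_nonneg _))).trans ?_)
    rw [← sub_mul, abs_mul, Nat.abs_cast, mul_assoc]
    gcongr
  have hF0 : F ⟨0, by simp⟩ = x := by funext n; simp [hF, c0]
  have hF1 : F ⟨1, by simp⟩ = y := by funext n; simp [hF, cN]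
  have hFc : ∀ t, F t ∈ conePts ω (wdist S) o s := by
    intro t
    obtain ⟨B, hB⟩ := hx
    refine ⟨B + (|(0 : ℝ) - t| * L + 1), ?_⟩
    filter_upwards [hB, hFd ⟨0, by simp⟩ t, hsω.eventually_ge_atTop 1] with n h1 h2 h3
    rw [hF0] at h2
    have h4 := wdist_triangle hS (o n) (x n) (F t n)
    linarith
  have hFz : ∀ t, coneDist ω (wdist S) s (F t) z ≠ 0 := by
    intro t
    refine (hδ.trans_le (ge_of_tendsto (tendsto_coneDist hS hs (hFc t) hz) ?_)).ne'
    filter_upwards [hd] with n hn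
    rw [le_div_iff₀ (hs n)]
    exact ((hc n hn).2.2 _ (hfl t n)).le
  have hFl : ∀ t t' p, p ∈ conePts ω (wdist S) o s →
      coneDist ω (wdist S) s p (F t') ≤
        coneDist ω (wdist S) s p (F t) + |(t : ℝ) - t'| * L := by
    intro t t' p hp
    have hlim : Tendsto (fun n => wdist S (p n) (F t n) / s n + |(t : ℝ) - t'| * L + (s n)⁻¹)
        (ω : Filter ℕ) (𝓝 (coneDist ω (wdist S) s p (F t) + |(t : ℝ) - t'| * L + 0)) :=
      ((tendsto_coneDist hS hs hp (hFc t)).add_const _).add hsω.inv_tendsto_atTop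
    rw [add_zero] at hlim
    refine le_of_tendsto_of_tendsto (tendsto_coneDist hS hs hp (hFc t')) hlim ?_
    filter_upwards [hFd t t'] with n hn
    rw [div_le_iff₀ (hs n), add_mul, add_mul, div_mul_cancel₀ _ (hs n).ne',
      inv_mul_cancel₀ (hs n).ne']
    have h4 := wdist_triangle hS (p n) (F t n) (F t' n)
    linarith
  refine ⟨range F, ?_, ⟨_, hF0⟩, ⟨_, hF1⟩, ?_⟩
  · rintro _ ⟨t, rfl⟩
    exact ⟨hFc t, hFz t⟩
  let : TopologicalSpace (ℕ → G) := coneTop ω (wdist S) o s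
  have : PreconnectedSpace (Icc (0 : ℝ) 1) := Subtype.preconnectedSpace isPreconnected_Icc
  refine isPreconnected_range (f := F) ?_
  refine continuous_generateFrom_iff.2 ?_
  rintro _ ⟨p, hp, ε, hε, rfl⟩
  rw [isOpen_iff_mem_nhds]
  intro t ht
  simp only [mem_preimage, mem_ofPred_eq] at ht
  have hcont : Tendsto (fun t' : Icc (0 : ℝ) 1 =>
      coneDist ω (wdist S) s p (F t) + |(t : ℝ) - t'| * L) (𝓝 t)
      (𝓝 (coneDist ω (wdist S) s p (F t) + |(t : ℝ) - t| * L)) :=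
    (Continuous.tendsto (by fun_prop) t)
  rw [sub_self, abs_zero, zero_mul, add_zero] at hcont
  filter_upwards [hcont.eventually_lt_const ht] with t' ht'
  exact (hFl t t' p hp).trans_lt ht'

end MorseGoG

namespace MorseGoG

variable {G : Type*} [Group G]

/-! ### From geodesic bypasses in the subgroup to detours around arbitrary points -/

/-- Finite-scale form of the implication from bypasses of geodesics of `H` to relative
wideness: points of `H` at distance `≥ a * s` from `z` and `≤ B * s` from each other are
joined by a detour around `z` at scale `s`.  An `H`-geodesic between them either stays away
from `z`, or passes close to `z` at a vertex far from both ends; in the latter case, the part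
of the geodesic centred at that vertex is replaced by the bypass. -/
theorem exists_detour_of_bypass {S : Set G} (hS : Subgroup.closure S = ⊤) (H : Subgroup G)
    (TH : Set H) (hTH : Subgroup.closure TH = ⊤) {C M K : ℝ} (hC : 1 ≤ C) (hM : 1 ≤ M)
    (hK : 1 ≤ K)
    (hCd : ∀ h h' : H, wdist TH h h' ≤ C * wdist S (h : G) (h' : G) + C)
    (hMd : ∀ h h' : H, wdist S (h : G) (h' : G) ≤ M * wdist TH h h')
    (hby : ∀ r : ℕ, K < (r : ℝ) → ∀ β : ℕ → H, IsGeodSeg (wdist TH) (2 * r) β →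
      Detour S (β r : G) (r / K) (K * r) (β 0 : G) (β (2 * r) : G))
    {a B : ℝ} (ha : 0 < a) :
    ∃ L δ s₀ : ℝ, 0 < δ ∧ ∀ s, s₀ ≤ s → ∀ (x y : H) (z : G), a * s ≤ wdist S (x : G) z →
      a * s ≤ wdist S (y : G) z → wdist S (x : G) (y : G) ≤ B * s →
      Detour S z (δ * s) (L * s) (x : G) (y : G) := by
  have hM0 : 0 < M := by linarith
  have hC0 : 0 < C := by linarith
  have hK0 : 0 < K := by linarith
  -- A vertex `β m` which is `ε * s`-close to `z` is at `H`-distance `≥ κ * s` from both ends.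
  obtain ⟨κ, hκdef⟩ : ∃ κ, κ = a / (2 * M) := ⟨_, rfl⟩
  have hκ : 0 < κ := by rw [hκdef]; positivity
  have hκM : κ * M = a / 2 := by rw [hκdef]; field_simp
  obtain ⟨ε, hεdef⟩ : ∃ ε, ε = κ / (4 * K * C) := ⟨_, rfl⟩
  have hε : 0 < ε := by rw [hεdef]; positivity
  have hεKC : 4 * ε * K * C = κ := by rw [hεdef]; field_simp
  have hεK : 4 * ε * K ≤ κ := by
    rw [← hεKC]; exact le_mul_of_one_le_right (by positivity) hC
  have hεC : 4 * ε * C ≤ κ := by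
    rw [← hεKC, mul_right_comm _ K C]; exact le_mul_of_one_le_right (by positivity) hK
  have hεa : ε ≤ a / 2 := by
    have h1 : 4 * ε ≤ 4 * ε * K := le_mul_of_one_le_right (by positivity) hK
    have h2 : κ ≤ κ * M := le_mul_of_one_le_right hκ.le hM
    linarith
  refine ⟨(2 * M + K) * (C * B + C), ε / 2, max 1 (max (2 * M / ε) ((K + 1) / κ)),
    by positivity, ?_⟩
  intro s hs x y z hxz hyz hxy
  have hs1 : 1 ≤ s := (le_max_left _ _).trans hs
  have hsM : 2 * M ≤ ε * s := by
    have := (le_max_left _ _).trans ((le_max_right _ _).trans hs)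
    rw [div_le_iff₀ hε] at this
    linarith
  have hsK : K + 1 ≤ κ * s := by
    have := (le_max_right _ _).trans ((le_max_right _ _).trans hs)
    rw [div_le_iff₀ hκ] at this
    linarith
  have hs0 : 0 < s := by linarith
  obtain ⟨l, β, β0, βl, hl, hβ⟩ := exists_geodSeg hTH x y
  have hlB : (l : ℝ) ≤ (C * B + C) * s := by
    have h1 := hCd x y
    have h2 := mul_le_mul_of_nonneg_left hxy hC0.le
    have h3 : C ≤ C * s := le_mul_of_one_le_right hC0.le hs1
    rw [hl]
    linarith
  have hstep : ∀ i < l, wdist S (β i : G) (β (i + 1) : G) ≤ M := by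
    intro i hi
    have h1 := hMd (β i) (β (i + 1))
    rw [hβ i hi.le (i + 1) hi] at h1
    simpa using h1
  by_cases hfar : ∀ i ≤ l, ε * s < wdist S (β i : G) z
  · have h1 := detour_of_coarse hS (z := z) (D := ε / 2 * s) (M := M) (fun i => (β i : G)) l
      hstep (fun i hi => lt_of_le_of_lt (by linarith) (hfar i hi)) hM0.le
    simp only [β0, βl] at h1
    refine h1.mono le_rfl ?_
    rw [mul_assoc]
    exact mul_le_mul (by linarith) hlB (Nat.cast_nonneg _) (by linarith)
  push Not at hfar
  obtain ⟨m, hm, hmz⟩ := hfar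
  have hmκ : κ * s ≤ m := by
    have h1 := hMd (β 0) (β m)
    rw [hβ 0 (Nat.zero_le _) m hm, β0] at h1
    simp only [Nat.cast_zero, zero_sub, abs_neg, Nat.abs_cast] at h1
    have h2 := wdist_triangle hS (x : G) (β m : G) z
    have h3 := mul_le_mul_of_nonneg_right hεa hs0.le
    refine le_of_mul_le_mul_left ?_ hM0
    have h4 : M * (κ * s) = a / 2 * s := by rw [← hκM]; ring
    linarith
  have hlm : κ * s ≤ ((l - m : ℕ) : ℝ) := by
    have h1 := hMd (β l) (β m)
    rw [hβ l le_rfl m hm, βl, ← Nat.cast_sub hm, Nat.abs_cast] at h1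
    have h2 := wdist_triangle hS (y : G) (β m : G) z
    have h3 := mul_le_mul_of_nonneg_right hεa hs0.le
    refine le_of_mul_le_mul_left ?_ hM0
    have h4 : M * (κ * s) = a / 2 * s := by rw [← hκM]; ring
    linarith
  obtain ⟨r, hrm, hrl, hrκ⟩ : ∃ r : ℕ, r ≤ m ∧ r ≤ l - m ∧ κ * s ≤ (r : ℝ) := by
    rcases le_total m (l - m) with h | h
    · exact ⟨m, le_rfl, h, hmκ⟩
    · exact ⟨l - m, h, le_rfl, hlm⟩
  have hmid : Detour S z (ε / 2 * s) (K * r) (β (m - r) : G) (β (m + r) : G) := by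
    have h1 := hby r (by linarith) (fun i => β (m - r + i)) (by
      intro i hi j hj
      rw [hβ _ (by omega) _ (by omega)]
      push_cast
      congr 1
      ring)
    simp only [add_zero, show m - r + r = m by omega,
      show m - r + 2 * r = m + r by omega] at h1
    obtain ⟨n, c, k1, k2, k3, k4, k5⟩ := h1
    refine ⟨n, c, k1, k2, k3, k4, fun i hi => ?_⟩
    have h2 := k5 i hi
    rw [div_lt_iff₀ hK0] at h2
    have h3 := wdist_triangle hS (c i) z (β m : G)
    rw [wdist_comm hS z] at h3
    have h4 : 4 * ε * s * K ≤ wdist S (c i) (β m : G) * K := by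
      have := mul_le_mul_of_nonneg_right hεK hs0.le
      linarith
    have h5 := le_of_mul_le_mul_right h4 hK0
    have h6 := mul_pos hε hs0
    linarith
  have hside : ∀ i ≤ l, (r : ℝ) ≤ |(i : ℝ) - m| →
      ε / 2 * s + M < wdist S (β i : G) z := by
    intro i hi hr
    have h1 := hCd (β i) (β m)
    rw [hβ i hi m hm] at h1
    have h2 : C * (4 * ε * s) ≤ C * (wdist S (β i : G) (β m : G) + 1) := by
      have := mul_le_mul_of_nonneg_right hεC hs0.le
      linarith
    have h3 := le_of_mul_le_mul_left h2 hC0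
    have h4 := wdist_triangle hS (β i : G) z (β m : G)
    rw [wdist_comm hS z] at h4
    linarith
  have hleft := detour_of_coarse hS (z := z) (D := ε / 2 * s) (M := M)
    (fun i => (β i : G)) (m - r) (fun i hi => hstep i (by omega))
    (fun i hi => hside i (by omega) (by
      have : (i : ℝ) + r ≤ m := by exact_mod_cast (by omega : i + r ≤ m)
      rw [abs_sub_comm]
      exact le_trans (by linarith) (le_abs_self _))) hM0.le
  have hright := detour_of_coarse hS (z := z) (D := ε / 2 * s) (M := M)
    (fun i => (β (m + r + i) : G)) (l - (m + r)) (fun i hi => hstep _ (by omega))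
    (fun i hi => hside _ (by omega) (by
      refine le_trans ?_ (le_abs_self _)
      push_cast
      have : (0 : ℝ) ≤ i := Nat.cast_nonneg _
      linarith)) hM0.le
  simp only [β0, add_zero, show m + r + (l - (m + r)) = l by omega, βl] at hleft hright
  refine ((hleft.trans hmid).trans hright).mono le_rfl ?_
  have e1 : ((m - r : ℕ) : ℝ) ≤ l := by exact_mod_cast (by omega : m - r ≤ l)
  have e2 : ((l - (m + r) : ℕ) : ℝ) ≤ l := by exact_mod_cast Nat.sub_le _ _
  have e3 : (r : ℝ) ≤ l := by exact_mod_cast (by omega : r ≤ l)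
  have e4 := mul_le_mul_of_nonneg_left e1 hM0.le
  have e5 := mul_le_mul_of_nonneg_left e2 hM0.le
  have e6 := mul_le_mul_of_nonneg_left e3 hK0.le
  have e7 := mul_le_mul_of_nonneg_left hlB (show 0 ≤ 2 * M + K by linarith)
  rw [mul_assoc]
  linarith

/-! ### The three implications -/

/-- A sequence of counterexamples to the bypass property, rescaled to unit size, yields a
cone in which the limit of the midpoints separates two limit points of `H`. -/
theorem qg_bypass_of_relativelyWide {S : Set G} (hS : Subgroup.closure S = ⊤)
    {H : Subgroup G} (hw : RelativelyWide S H) {C : ℝ} (hC : 1 ≤ C) :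
    ∃ K : ℝ, 1 ≤ K ∧ ∀ r : ℝ, K < r → ∀ α : ℝ → G,
      IsQG (wdist S) C (Set.Icc (-r) r) α → α (-r) ∈ H → α r ∈ H →
      Detour S (α 0) (r / K) (K * r) (α (-r)) (α r) := by
  by_contra! hcon
  have hcon' := fun n : ℕ => hcon ((n : ℝ) + 1) (by linarith [Nat.cast_nonneg (α := ℝ) n])
  choose r hr α hα hα1 hα2 hno using hcon'
  have hC0 : 0 < C := by linarith
  have hr1 : ∀ n, 1 < r n := fun n => by linarith [hr n, Nat.cast_nonneg (α := ℝ) n]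
  have hr0 : ∀ n, 0 < r n := fun n => by linarith [hr1 n]
  have hrt : Tendsto r atTop atTop :=
    tendsto_atTop_mono (fun n => by linarith [hr n]) tendsto_natCast_atTop_atTop
  set ω : Ultrafilter ℕ := hyperfilter ℕ
  have hω : (ω : Filter ℕ) ≤ cofinite := hyperfilter_le_cofinite
  have hω' : (ω : Filter ℕ) ≤ atTop := by rwa [Nat.cofinite_eq_atTop] at hω
  set z : ℕ → G := fun n => α n 0 with hzdef
  have hz : z ∈ conePts ω (wdist S) z r :=
    ⟨0, Eventually.of_forall fun n => by simp [wdist_self]⟩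
  -- Both endpoints lie in the cone based at the midpoints, away from the basepoint.
  have hend : ∀ σ : ℝ, |σ| = 1 → (fun n => α n (σ * r n)) ∈ conePts ω (wdist S) z r ∧
      ((fun n => α n (σ * r n)) ∈ conePts ω (wdist S) z r →
        coneDist ω (wdist S) r (fun n => α n (σ * r n)) z ≠ 0) := by
    intro σ hσ
    have hb : ∀ n, |0 - σ * r n| = r n := fun n => by
      rw [zero_sub, abs_neg, abs_mul, hσ, one_mul, abs_of_pos (hr0 n)]
    have hb' : ∀ n, |σ * r n - 0| = r n := fun n => by rw [abs_sub_comm, hb]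
    have hmem : ∀ n, σ * r n ∈ Icc (-(r n)) (r n) := fun n =>
      abs_le.1 (by simpa using (hb' n).le)
    have hmem0 : ∀ n, (0 : ℝ) ∈ Icc (-(r n)) (r n) := fun n =>
      ⟨by linarith [hr0 n], (hr0 n).le⟩
    refine ⟨⟨2 * C, Eventually.of_forall fun n => ?_⟩, fun hx => ?_⟩
    · have h1 := ((hα n).2 0 (hmem0 n) _ (hmem n)).2
      rw [hb] at h1
      have h2 : C ≤ C * r n := le_mul_of_one_le_right hC0.le (hr1 n).le
      simp only [hzdef]
      linarith
    · have hlim : Tendsto (fun n => 1 / C - C * (r n)⁻¹) (ω : Filter ℕ) (𝓝 (1 / C - C * 0)) :=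
        ((hrt.mono_left hω').inv_tendsto_atTop.const_mul C).const_sub _
      have h1 := le_of_tendsto_of_tendsto' hlim (tendsto_coneDist hS hr0 hx hz) fun n => by
        have h1 := ((hα n).2 _ (hmem n) 0 (hmem0 n)).1
        rw [hb'] at h1
        rw [le_div_iff₀ (hr0 n), sub_mul, mul_assoc, inv_mul_cancel₀ (hr0 n).ne', mul_one,
          one_div_mul_eq_div]
        exact h1
      have h2 : 0 < 1 / C := by positivity
      intro h3
      rw [h3] at h1
      linarith
  have hx := hend (-1) (by simp)
  have hy := hend 1 (by simp)
  simp only [neg_mul, one_mul] at hx hy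
  have hsep := hw ω hω z r hr0 hrt (fun n => α n (-(r n))) (fun n => α n (r n)) z hα1 hα2
    hx.1 hy.1 hz
  unfold ConeSeparates at hsep
  push Not at hsep
  obtain ⟨A, hA, hxA, hyA, hconn⟩ := hsep (hx.2 hx.1) (hy.2 hy.1)
  obtain ⟨L, δ, hδ, hd⟩ := coneDetour_of_preconnected hS hr0 hz hA hxA hyA hconn
  have hlarge : ∀ᶠ n : ℕ in (ω : Filter ℕ), max L (1 / δ) ≤ (n : ℝ) :=
    (tendsto_natCast_atTop_atTop.mono_left hω').eventually_ge_atTop _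
  obtain ⟨n, hn, hnL⟩ := (hd.and hlarge).exists
  have h1 : L ≤ n := (le_max_left _ _).trans hnL
  have h2 : 1 / δ ≤ n := (le_max_right _ _).trans hnL
  refine hno n (hn.mono ?_ (mul_le_mul_of_nonneg_right (by linarith) (hr0 n).le))
  rw [div_le_iff₀ hδ] at h2
  rw [div_le_iff₀ (by linarith [hr0 n, Nat.cast_nonneg (α := ℝ) n])]
  have h3 := mul_le_mul_of_nonneg_right h2 (hr0 n).le
  have h4 := mul_pos hδ (hr0 n)
  linarith

/-- A geodesic of an undistorted subgroup, made into a function of a real parameter by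
rounding down, is a quasi-geodesic of the ambient group. -/
theorem isQG_of_geodSeg {S : Set G} {H : Subgroup G} {TH : Set H} {C M : ℝ} (hC : 1 ≤ C)
    (hM : 1 ≤ M)
    (hCd : ∀ h h' : H, wdist TH h h' ≤ C * wdist S (h : G) (h' : G) + C)
    (hMd : ∀ h h' : H, wdist S (h : G) (h' : G) ≤ M * wdist TH h h')
    {r : ℕ} {β : ℕ → H} (hβ : IsGeodSeg (wdist TH) (2 * r) β) :
    IsQG (wdist S) (C + M + 1) (Icc (-(r : ℝ)) r) (fun t => (β ⌊t + r⌋₊ : G)) := by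
  refine ⟨by linarith, fun u hu v hv => ?_⟩
  have hfl : ∀ t ∈ Icc (-(r : ℝ)) r, ⌊t + r⌋₊ ≤ 2 * r := fun t ht =>
    Nat.floor_le_of_le (by push_cast; linarith [ht.2])
  have hu0 : 0 ≤ u + r := by linarith [hu.1]
  have hv0 : 0 ≤ v + r := by linarith [hv.1]
  have h1 := abs_natFloor_sub_le hu0 hv0
  have h1' : |u - v| - 1 ≤ |(⌊u + r⌋₊ : ℝ) - ⌊v + r⌋₊| := by
    have a1 := Nat.floor_le hu0
    have a2 := Nat.lt_floor_add_one (u + r)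
    have a3 := Nat.floor_le hv0
    have a4 := Nat.lt_floor_add_one (v + r)
    have a5 := le_abs_self ((⌊u + r⌋₊ : ℝ) - ⌊v + r⌋₊)
    have a6 := neg_abs_le ((⌊u + r⌋₊ : ℝ) - ⌊v + r⌋₊)
    have : |u - v| ≤ |(⌊u + r⌋₊ : ℝ) - ⌊v + r⌋₊| + 1 := by
      rw [abs_le]
      constructor <;> linarith
    linarith
  rw [add_sub_add_right_eq_sub] at h1
  have h2 := hCd (β ⌊u + r⌋₊) (β ⌊v + r⌋₊)
  have h3 := hMd (β ⌊u + r⌋₊) (β ⌊v + r⌋₊)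
  rw [hβ _ (hfl u hu) _ (hfl v hv)] at h2 h3
  have hd := wdist_nonneg S (β ⌊u + r⌋₊ : G) (β ⌊v + r⌋₊ : G)
  have hab := abs_nonneg (u - v)
  simp only
  constructor
  · rw [sub_le_iff_le_add, div_le_iff₀ (by linarith)]
    nlinarith
  · nlinarith

theorem relativelyWide_of_bypass {S : Set G} (hS : Subgroup.closure S = ⊤) (H : Subgroup G)
    (TH : Set H) (hTH : Subgroup.closure TH = ⊤) {C M K : ℝ} (hC : 1 ≤ C) (hM : 1 ≤ M)
    (hK : 1 ≤ K)
    (hCd : ∀ h h' : H, wdist TH h h' ≤ C * wdist S (h : G) (h' : G) + C)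
    (hMd : ∀ h h' : H, wdist S (h : G) (h' : G) ≤ M * wdist TH h h')
    (hby : ∀ r : ℕ, K < (r : ℝ) → ∀ β : ℕ → H, IsGeodSeg (wdist TH) (2 * r) β →
      Detour S (β r : G) (r / K) (K * r) (β 0 : G) (β (2 * r) : G)) :
    RelativelyWide S H := by
  intro ω hω o s hs hs' x y z hxH hyH hx hy hz hsep
  obtain ⟨hxz, hyz, hno⟩ := hsep
  have hpos : ∀ w ∈ conePts ω (wdist S) o s, coneDist ω (wdist S) s w z ≠ 0 →
      0 < coneDist ω (wdist S) s w z := fun w hw hwz =>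
    lt_of_le_of_ne (ge_of_tendsto' (tendsto_coneDist hS hs hw hz)
      fun n => div_nonneg (wdist_nonneg _ _ _) (hs n).le) (Ne.symm hwz)
  obtain ⟨a, ha, hax, hay⟩ : ∃ a, 0 < a ∧ a < coneDist ω (wdist S) s x z ∧
      a < coneDist ω (wdist S) s y z := by
    obtain ⟨a, ha, hlt⟩ := exists_between (lt_min (hpos x hx hxz) (hpos y hy hyz))
    exact ⟨a, ha, hlt.trans_le (min_le_left _ _), hlt.trans_le (min_le_right _ _)⟩
  obtain ⟨L, δ, s₀, hδ, hd⟩ := exists_detour_of_bypass hS H TH hTH hC hM hK hCd hMd hby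
    (a := a) (B := coneDist ω (wdist S) s x y + 1) ha
  refine hno (exists_preconnected_of_coneDetour hS hω hs hs' hx hz ⟨L, δ, hδ, ?_⟩)
  have hsω : Tendsto s (ω : Filter ℕ) atTop :=
    hs'.mono_left (by rwa [Nat.cofinite_eq_atTop] at hω)
  filter_upwards [hsω.eventually_ge_atTop s₀,
    (tendsto_coneDist hS hs hx hz).eventually_const_lt hax,
    (tendsto_coneDist hS hs hy hz).eventually_const_lt hay,
    (tendsto_coneDist hS hs hx hy).eventually_lt_const (lt_add_one _)] with n h0 h1 h2 h3
  rw [lt_div_iff₀ (hs n)] at h1 h2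
  rw [div_lt_iff₀ (hs n)] at h3
  exact hd (s n) h0 ⟨x n, hxH n⟩ ⟨y n, hyH n⟩ (z n) h1.le h2.le h3.le

end MorseGoG

namespace MorseGoG

/-- **Lemma 2.10** (Statement 7).  For finitely generated groups `H ≤ G` with `H`
undistorted, the following are equivalent: (1) `H` is relatively wide in `G`;
(2) quasi-geodesic segments of `Γ = Cay(G, S)` with endpoints in `H` can be uniformly
linearly bypassed around their midpoints; (3) geodesic segments of `Λ = Cay(H, T_H)`,
viewed in `Γ`, can be uniformly linearly bypassed around their midpoints. -/
theorem relatively_wide_tfae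
    {G : Type*} [Group G]
    (S : Finset G) (hSgen : Subgroup.closure (S : Set G) = ⊤)
    (H : Subgroup G) (TH : Finset H)
    (hTHgen : Subgroup.closure (TH : Set H) = ⊤)
    (hund : ∃ C : ℝ, 1 ≤ C ∧ ∀ h h' : H,
      wdist (TH : Set H) h h' ≤ C * wdist (S : Set G) (h : G) (h' : G) + C) :
    (RelativelyWide (S : Set G) H ↔
      (∀ C : ℝ, 1 ≤ C → ∃ K : ℝ, 1 ≤ K ∧
        ∀ r : ℝ, K < r → ∀ α : ℝ → G,
          IsQG (wdist (S : Set G)) C (Set.Icc (-r) r) α →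
          α (-r) ∈ H → α r ∈ H →
          ∃ (n : ℕ) (c : ℕ → G), IsEdgePath (wdist (S : Set G)) n c ∧
            c 0 = α (-r) ∧ c n = α r ∧ (n : ℝ) ≤ K * r ∧
            ∀ i ≤ n, r / K < wdist (S : Set G) (c i) (α 0))) ∧
    (RelativelyWide (S : Set G) H ↔
      (∃ K₀ : ℝ, 1 ≤ K₀ ∧
        ∀ r : ℕ, K₀ < (r : ℝ) → ∀ β : ℕ → H,
          IsGeodSeg (wdist (TH : Set H)) (2 * r) β →
          ∃ (n : ℕ) (c : ℕ → G), IsEdgePath (wdist (S : Set G)) n c ∧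
            c 0 = (β 0 : G) ∧ c n = (β (2 * r) : G) ∧ (n : ℝ) ≤ K₀ * r ∧
            ∀ i ≤ n, (r : ℝ) / K₀ < wdist (S : Set G) (c i) (β r : G))) := by
  obtain ⟨C, hC, hCd⟩ := hund
  obtain ⟨M, hM, hMd⟩ := exists_lipschitz_incl hSgen H TH hTHgen
  refine (fun (h12 : _ → _) (h23 : _ → _) (h31 : _ → _) =>
    ⟨⟨h12, fun h => h31 (h23 h)⟩, ⟨fun h => h23 (h12 h), h31⟩⟩) ?_ ?_ ?_
  · intro hw C' hC'
    exact qg_bypass_of_relativelyWide hSgen hw hC'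
  · intro h
    obtain ⟨K, hK, h⟩ := h (C + M + 1) (by linarith)
    refine ⟨K, hK, fun r hr β hβ => ?_⟩
    have h1 := h r hr _ (isQG_of_geodSeg hC hM hCd hMd hβ) (by simp) (by simp)
    have e : ⌊(r : ℝ) + r⌋₊ = 2 * r := by
      rw [← Nat.cast_add, Nat.floor_natCast, two_mul]
    simpa [e] using h1
  · rintro ⟨K, hK, h⟩
    exact relativelyWide_of_bypass hSgen H _ hTHgen hC hM hK hCd hMd h

end MorseGoG
end

section
/- Let G be a group generated by a finite set S_G with Cayley graph Γ, admitting a minimal, non-elliptic action without inversions on a simplicial tree T. Let p ∈ T be a vertex with stabiliser V. Then there exist a constant D_p and stabilisers E₁,…,E_k of edges of T incident to p such that every path γ in Γ joining two points of V can be decomposed as a concatenation γ₁γ₂⋯γ_m in which, for each i, both endpoints of γ_i lie in the D_p-neighbourhood in Γ of a left coset v_iE_{j_i} with v_i ∈ V and 1 ≤ j_i ≤ k. -/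
/-!
The orbit map `g ↦ g • p` sends a path of the Cayley graph joining two points of `V` to a sequence
of vertices of the tree `T` starting and ending at `p`. Removing `p` cuts `T` into branches, one
for each edge at `p`. Each excursion of the sequence into a branch enters and leaves it by
crossing the edge `(p, e)` at its root, so the path is cut into such excursions and single steps
starting in `V` (`exists_cut`).

If a step from `x` to `y` crosses `(p, e)`, then `x⁻¹` carries this edge to one separating `p` from
`s • p` for some `s` of length at most `1`. There are only finitely many such edges
(`finite_separating`, `ctrl_finite`). All elements carrying edges of a fixed finite set to `(p, e)`
lie at uniformly bounded distance from the set of elements carrying a representative `(p, ed j)` of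
its orbit to `(p, e)`, and that set is a coset `v E_j` with `v ∈ V` (`exists_cosets`).

Single steps starting at `x ∈ V` are treated by the same mechanism, using the edge
`x • (p, e₀)` for a fixed edge `(p, e₀)`; such an edge exists because `p` is not a global fixed
point.
-/

open Set Filter Topology
open scoped ENNReal

namespace MorseGoG

/-! ### Branches of a tree -/

section Branch

variable {VT : Type*} {T : SimpleGraph VT}

/-- `x` lies on the `b`-side of the edge `{a, b}`: it can be joined to `b` without using this
edge. In a tree this is the halfspace of `{a, b}` containing `b`; the definition by
reachability replaces computations with tree distances by connectivity arguments. -/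
def Branch (T : SimpleGraph VT) (a b x : VT) : Prop :=
  (T.deleteEdges {s(a, b)}).Reachable b x

theorem Branch.step {a b x y : VT} (h : Branch T a b x) (hxy : T.Adj x y)
    (hne : s(x, y) ≠ s(a, b)) : Branch T a b y :=
  h.trans (SimpleGraph.Adj.reachable (by simp [SimpleGraph.deleteEdges_adj, hxy, hne]))

theorem not_branch_self (hT : T.IsAcyclic) {a b : VT} (hab : T.Adj a b) : ¬ Branch T a b a := by
  intro h
  exact (SimpleGraph.isAcyclic_iff_forall_adj_isBridge.mp hT hab) h.symm

/-- Every vertex other than `p` lies on the far side of some edge at `p`. -/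
theorem exists_branch (hT : T.Connected) {p x : VT} (hx : x ≠ p) :
    ∃ e, T.Adj p e ∧ Branch T p e x := by
  have h := (SimpleGraph.reachable_iff_reflTransGen p x).mp (hT.preconnected p x)
  have key : x = p ∨ ∃ e, T.Adj p e ∧ Branch T p e x := by
    clear hx
    induction h with
    | refl => exact Or.inl rfl
    | @tail b c _ hbc ih =>
      by_cases hc : c = p
      · exact Or.inl hc
      right
      rcases ih with rfl | ⟨e, he, hb⟩
      · exact ⟨c, hbc, SimpleGraph.Reachable.refl _⟩
      · by_cases hbp : b = p
        · subst hbp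
          exact ⟨c, hbc, SimpleGraph.Reachable.refl _⟩
        · refine ⟨e, he, hb.step hbc ?_⟩
          intro hs
          rw [Sym2.eq_iff] at hs
          rcases hs with ⟨h1, -⟩ | ⟨-, h1⟩
          · exact hbp h1
          · exact hc h1
  exact key.resolve_left hx

/-- Different edges at `p` have disjoint far sides: a walk inside the first one never visits `p`,
so it avoids the second edge, and the two sides would be joined in the complement of a bridge. -/
theorem branch_unique (hT : T.IsAcyclic) {p e e' x : VT} (he : T.Adj p e) (he' : T.Adj p e')
    (h : Branch T p e x) (h' : Branch T p e' x) : e = e' := by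
  by_contra hne
  have hr := (SimpleGraph.reachable_iff_reflTransGen _ _).mp h
  have key : Branch T p e x ∧ (T.deleteEdges {s(p, e')}).Reachable e x := by
    clear h h'
    induction hr with
    | refl => exact ⟨SimpleGraph.Reachable.refl _, SimpleGraph.Reachable.refl _⟩
    | @tail b c _ hbc ih =>
      have hc : Branch T p e c := ih.1.trans hbc.reachable
      refine ⟨hc, ih.2.trans (SimpleGraph.Adj.reachable ?_)⟩
      rw [SimpleGraph.deleteEdges_adj] at hbc ⊢
      refine ⟨hbc.1, ?_⟩
      intro hs
      rw [Set.mem_singleton_iff, Sym2.eq_iff] at hs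
      rcases hs with ⟨h1, -⟩ | ⟨-, h1⟩
      · exact not_branch_self hT he (h1 ▸ ih.1)
      · exact not_branch_self hT he (h1 ▸ hc)
  refine not_branch_self hT he' ((h'.trans key.2.symm).trans (SimpleGraph.Adj.reachable ?_))
  rw [SimpleGraph.deleteEdges_adj]
  refine ⟨he.symm, ?_⟩
  intro hs
  rw [Set.mem_singleton_iff, Sym2.eq_iff] at hs
  rcases hs with ⟨h1, -⟩ | ⟨h1, -⟩
  · exact he.ne h1.symm
  · exact hne h1

/-- Only finitely many (oriented) edges separate two given vertices: each of them is traversed by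
any fixed walk between the two. -/
theorem finite_separating (hT : T.Connected) (x y : VT) :
    {f : VT × VT | ¬ (Branch T f.1 f.2 x ↔ Branch T f.1 f.2 y)}.Finite := by
  obtain ⟨w⟩ := hT.preconnected x y
  induction w with
  | nil => simp
  | @cons u v _ huv w ih =>
    refine (ih.union (Set.Finite.insert (u, v) (Set.finite_singleton (v, u)))).subset ?_
    rintro ⟨a, b⟩ hf
    by_cases hs : s(u, v) = s(a, b)
    · right
      rw [Sym2.eq_iff] at hs
      rcases hs with ⟨rfl, rfl⟩ | ⟨rfl, rfl⟩
      · exact Or.inl rfl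
      · exact Or.inr rfl
    · left
      have h1 : Branch T a b u ↔ Branch T a b v :=
        ⟨fun h => h.step huv hs, fun h => h.step huv.symm (by rwa [Sym2.eq_swap])⟩
      simp only [Set.mem_ofPred_eq] at hf ⊢
      rwa [← h1]

end Branch

section Action

variable {G VT : Type*} [Group G] [MulAction G VT] {T : SimpleGraph VT}

theorem Branch.smul (hadj : ∀ (g : G) (a b : VT), T.Adj a b → T.Adj (g • a) (g • b)) (g : G)
    {a b x : VT} (h : Branch T a b x) : Branch T (g • a) (g • b) (g • x) := by
  have hr := (SimpleGraph.reachable_iff_reflTransGen _ _).mp h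
  clear h
  induction hr with
  | refl => exact SimpleGraph.Reachable.refl _
  | @tail c d _ hcd ih =>
    rw [SimpleGraph.deleteEdges_adj] at hcd
    refine ih.step (hadj g _ _ hcd.1) ?_
    intro hs
    apply hcd.2
    simpa [Sym2.eq_iff] using hs

theorem branch_smul_iff (hadj : ∀ (g : G) (a b : VT), T.Adj a b → T.Adj (g • a) (g • b)) (g : G)
    {a b x : VT} : Branch T (g • a) (g • b) (g • x) ↔ Branch T a b x :=
  ⟨fun h => by simpa using h.smul hadj g⁻¹, fun h => h.smul hadj g⟩

/-! ### Word metric -/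

/-- The elements of word length at most `1`. -/
def unitBall (S : Finset G) : Set G := {s | s ∈ S ∨ s⁻¹ ∈ S ∨ s = 1}

theorem unitBall_finite (S : Finset G) : (unitBall S).Finite := by
  have h : unitBall S ⊆ (S : Set G) ∪ (Inv.inv '' (S : Set G)) ∪ {1} := by
    rintro s (h | h | h)
    · exact Or.inl (Or.inl h)
    · exact Or.inl (Or.inr ⟨_, h, inv_inv s⟩)
    · exact Or.inr h
  exact ((S.finite_toSet.union (S.finite_toSet.image _)).union (Set.finite_singleton _)).subset h

theorem inv_mem_unitBall {S : Finset G} {s : G} (h : s ∈ unitBall S) : s⁻¹ ∈ unitBall S := by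
  rcases h with h | h | h
  · exact Or.inr (Or.inl (by simpa using h))
  · exact Or.inl h
  · exact Or.inr (Or.inr (by simp [h]))

/-- Since `S` generates, the infimum in `wordLength` is attained; hence two points at distance at
most `1` differ by an element of `unitBall S`. -/
theorem mem_unitBall_of_wdist {S : Finset G} (hS : Subgroup.closure (S : Set G) = ⊤) {x y : G}
    (h : wdist (S : Set G) x y ≤ 1) : x⁻¹ * y ∈ unitBall S := by
  have hlen : wordLength (S : Set G) (x⁻¹ * y) ≤ 1 := by
    unfold wdist at h
    exact_mod_cast h
  have hne : {n : ℕ | ∃ l : List G, l.length = n ∧ (∀ z ∈ l, z ∈ (S : Set G) ∨ z⁻¹ ∈ (S : Set G)) ∧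
      l.prod = x⁻¹ * y}.Nonempty := by
    have hm : x⁻¹ * y ∈ (Subgroup.closure (S : Set G)).toSubmonoid := by
      rw [hS]; trivial
    rw [Subgroup.closure_toSubmonoid] at hm
    obtain ⟨l, hl, hp⟩ := Submonoid.exists_list_of_mem_closure hm
    exact ⟨l.length, l, rfl, fun z hz => by simpa using hl z hz, hp⟩
  obtain ⟨l, h1, h2, h3⟩ := Nat.sInf_mem hne
  have h1' : l.length ≤ 1 := h1.trans_le hlen
  rw [← h3]
  match l, h1', h2 with
  | [], _, _ => exact Or.inr (Or.inr rfl)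
  | [a], _, h2 =>
    rcases h2 a (by simp) with h | h
    · exact Or.inl (by simpa using h)
    · exact Or.inr (Or.inl (by simpa using h))

/-! ### Closeness to edge cosets -/

/-- The finite set of oriented edges controlling the decomposition: those separating `p` from one
of its images under `unitBall S`, and the images of the fixed edge `(p, e₀)` under
`unitBall S`. -/
def ctrl (S : Finset G) (T : SimpleGraph VT) (p e₀ : VT) : Set (VT × VT) :=
  {f | ∃ s ∈ unitBall S, ¬ (Branch T f.1 f.2 p ↔ Branch T f.1 f.2 (s • p))} ∪
    (fun s : G => (s • p, s • e₀)) '' unitBall S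

theorem ctrl_finite (S : Finset G) (hT : T.Connected) (p e₀ : VT) : (ctrl S T p e₀).Finite := by
  refine Set.Finite.union ?_ ((unitBall_finite S).image _)
  have := (unitBall_finite S).biUnion (fun s _ => finite_separating hT p (s • p))
  refine this.subset ?_
  rintro f ⟨s, hs, hf⟩
  exact Set.mem_biUnion hs hf

/-- `x` is close to the edge `(p, e)`: translated by `x⁻¹`, that edge is one of the finitely many
controlling edges. When `v` carries `(p, ed j)` to `(p, e)` this bounds the distance from `x` to
the coset `v * edgeStab G p (ed j)`. -/
def EdgeClose (S : Finset G) (T : SimpleGraph VT) (p e₀ : VT) (x : G) (e : VT) : Prop :=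
  T.Adj p e ∧ (x⁻¹ • p, x⁻¹ • e) ∈ ctrl S T p e₀

/-- A step from `x` to `y` of the path whose image crosses the edge `(p, e)` starts close to that
edge; applied to the reversed step, it ends close to it as well. -/
theorem edgeClose_of_cross (hadj : ∀ (g : G) (a b : VT), T.Adj a b → T.Adj (g • a) (g • b))
    {S : Finset G} {p e₀ e : VT} {x y : G} (hxy : x⁻¹ * y ∈ unitBall S) (he : T.Adj p e)
    (h : ¬ (Branch T p e (x • p) ↔ Branch T p e (y • p))) : EdgeClose S T p e₀ x e := by
  refine ⟨he, Or.inl ⟨x⁻¹ * y, hxy, ?_⟩⟩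
  rw [← branch_smul_iff hadj x⁻¹, ← branch_smul_iff hadj x⁻¹ (x := y • p)] at h
  simpa [mul_smul] using h

theorem edgeClose_of_fix {S : Finset G} {p e₀ : VT} (he₀ : T.Adj p e₀)
    (hadj : ∀ (g : G) (a b : VT), T.Adj a b → T.Adj (g • a) (g • b)) {x y : G}
    (hx : x • p = p) (hxy : y⁻¹ * x ∈ unitBall S) : EdgeClose S T p e₀ y (x • e₀) := by
  refine ⟨?_, Or.inr ⟨y⁻¹ * x, hxy, ?_⟩⟩
  · have := hadj x _ _ he₀
    rwa [hx] at this
  · simp [mul_smul, hx]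

/-- Elements close to a common edge at `p` lie in a uniform neighbourhood of a common coset. The
edges `(p, ed j)` are translates of the controlling edges, one for each controlling edge that can
be moved to have origin `p`; the constant `D` bounds the lengths of the inverses of chosen elements
carrying a controlling edge to some `(p, ed j)`. -/
theorem exists_cosets (S : Finset G) (hT : T.Connected) (p e₀ : VT) :
    ∃ (D : ℝ) (k : ℕ) (ed : Fin k → VT), (∀ i, T.Adj p (ed i)) ∧
      ∀ (x y : G) (e : VT), EdgeClose S T p e₀ x e → EdgeClose S T p e₀ y e →
        ∃ v ∈ MulAction.stabilizer G p, ∃ j : Fin k,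
          InNbhd (wdist (S : Set G))
            ((fun e => v * e) '' (edgeStab G p (ed j) : Set G)) D x ∧
          InNbhd (wdist (S : Set G))
            ((fun e => v * e) '' (edgeStab G p (ed j) : Set G)) D y := by
  classical
  let F := ctrl S T p e₀
  have hF : F.Finite := ctrl_finite S hT p e₀
  let J := {f : VT × VT | f ∈ F ∧ ∃ g : G, g • f.1 = p ∧ T.Adj p (g • f.2)}
  have hJ : J.Finite := hF.subset fun f hf => hf.1
  have : Finite J := hJ
  have : Finite F := hF
  obtain ⟨k, ⟨φ⟩⟩ := Finite.exists_equiv_fin J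
  have hg : ∀ j : J, ∃ g : G, g • j.1.1 = p ∧ T.Adj p (g • j.1.2) := fun j => j.2.2
  choose γ hγ1 hγ2 using hg
  let ed : Fin k → VT := fun i => γ (φ.symm i) • (φ.symm i).1.2
  have hch : ∀ z : F × Fin k, ∃ g : G,
      (∃ g' : G, g' • z.1.1.1 = p ∧ g' • z.1.1.2 = ed z.2) →
        g • z.1.1.1 = p ∧ g • z.1.1.2 = ed z.2 := by
    intro z
    by_cases h : ∃ g' : G, g' • z.1.1.1 = p ∧ g' • z.1.1.2 = ed z.2
    · obtain ⟨g, hg⟩ := h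
      exact ⟨g, fun _ => hg⟩
    · exact ⟨1, fun h' => absurd h' h⟩
  choose η hη using hch
  obtain ⟨D, hD⟩ := (Set.finite_range
    (fun z : F × Fin k => (wordLength (S : Set G) (η z)⁻¹ : ℝ))).bddAbove
  refine ⟨D, k, ed, fun i => hγ2 _, ?_⟩
  -- Any `v` carrying `(p, ed j)` to `(p, e)` serves every element close to `(p, e)`.
  have near : ∀ (y v : G) (e : VT) (j : Fin k), EdgeClose S T p e₀ y e → v • p = p →
      v • ed j = e → InNbhd (wdist (S : Set G))
        ((fun e => v * e) '' (edgeStab G p (ed j) : Set G)) D y := by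
    intro y v e j hy hvp hve
    let z : F × Fin k := (⟨_, hy.2⟩, j)
    have hvp' : v⁻¹ • p = p := by rw [inv_smul_eq_iff, hvp]
    have hve' : v⁻¹ • e = ed j := by rw [inv_smul_eq_iff, hve]
    obtain ⟨h1, h2⟩ := hη z ⟨v⁻¹ * y, by simp [z, mul_smul, hvp'], by simp [z, mul_smul, hve']⟩
    have h1' : (η z)⁻¹ • p = y⁻¹ • p := by rw [inv_smul_eq_iff]; exact h1.symm
    have h2' : (η z)⁻¹ • ed j = y⁻¹ • e := by rw [inv_smul_eq_iff]; exact h2.symm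
    refine ⟨y * (η z)⁻¹, ⟨v⁻¹ * (y * (η z)⁻¹), ?_, by simp⟩, ?_⟩
    · refine ⟨?_, ?_⟩
      · change (v⁻¹ * (y * (η z)⁻¹)) • p = p
        simp [mul_smul, h1', hvp']
      · change (v⁻¹ * (y * (η z)⁻¹)) • ed j = ed j
        simp [mul_smul, h2', hve']
    · have := hD ⟨z, rfl⟩
      simpa [wdist] using this
  intro x y e hx hy
  have hmem : ((x⁻¹ • p, x⁻¹ • e) : VT × VT) ∈ J :=
    ⟨hx.2, x, by simp, by simpa using hx.1⟩
  let f : J := ⟨_, hmem⟩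
  have hf : (γ f)⁻¹ • p = x⁻¹ • p := by rw [inv_smul_eq_iff]; exact (hγ1 f).symm
  have hvp : (x * (γ f)⁻¹) • p = p := by simp [mul_smul, hf]
  have hve : (x * (γ f)⁻¹) • ed (φ f) = e := by simp [ed, mul_smul, f]
  exact ⟨x * (γ f)⁻¹, hvp, φ f, near x _ e _ hx hvp hve, near y _ e _ hy hvp hve⟩

/-! ### Cutting the path -/

/-- Cutting a path that ends in the stabiliser of `p`, from time `a` on. The cutting times visit
`p`, or have just crossed into the branch at `p` that they lie in. The piece starting at a time
of the first kind is a single step; the piece starting at a time of the second kind lasts until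
the path leaves that branch. -/
theorem exists_cut {S : Finset G} (hS : Subgroup.closure (S : Set G) = ⊤) (hT : T.IsTree)
    (hadj : ∀ (g : G) (a b : VT), T.Adj a b → T.Adj (g • a) (g • b)) {p e₀ : VT}
    (he₀ : T.Adj p e₀) {n : ℕ} {c : ℕ → G} (hc : IsEdgePath (wdist (S : Set G)) n c)
    (hn : c n • p = p) :
    ∀ r a : ℕ, a + r = n →
      (c a • p = p ∨ ∃ e, EdgeClose S T p e₀ (c a) e ∧ Branch T p e (c a • p)) →
      ∃ (m : ℕ) (t : ℕ → ℕ), 1 ≤ m ∧ t 0 = a ∧ t m = n ∧ (∀ i < m, t i ≤ t (i + 1)) ∧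
        ∀ i < m, ∃ e, EdgeClose S T p e₀ (c (t i)) e ∧ EdgeClose S T p e₀ (c (t (i + 1))) e := by
  have hstep : ∀ i < n, (c i)⁻¹ * c (i + 1) ∈ unitBall S := fun i hi =>
    mem_unitBall_of_wdist hS (hc i hi)
  have hstep' : ∀ i < n, (c (i + 1))⁻¹ * c i ∈ unitBall S := fun i hi => by
    simpa using inv_mem_unitBall (hstep i hi)
  intro r
  induction r using Nat.strong_induction_on with
  | _ r ih =>
  intro a har hinv
  rcases Nat.eq_zero_or_pos r with rfl | hr
  · obtain rfl : a = n := by omega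
    have h := edgeClose_of_fix (S := S) he₀ hadj hn (y := c a)
      (by rw [inv_mul_cancel]; exact Or.inr (Or.inr rfl))
    exact ⟨1, fun _ => a, le_rfl, rfl, rfl, fun _ _ => le_rfl, fun _ _ => ⟨_, h, h⟩⟩
  -- It suffices to find one piece `[a, b]` after which the invariant holds again.
  suffices H : ∃ b, a < b ∧ b ≤ n ∧
      (c b • p = p ∨ ∃ e, EdgeClose S T p e₀ (c b) e ∧ Branch T p e (c b • p)) ∧
      ∃ e, EdgeClose S T p e₀ (c a) e ∧ EdgeClose S T p e₀ (c b) e by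
    obtain ⟨b, hab, hbn, hb, hpiece⟩ := H
    obtain ⟨m, t, -, h0, hm, hmono, hcl⟩ := ih (n - b) (by omega) b (by omega) hb
    refine ⟨m + 1, fun i => Nat.casesOn i a t, by omega, rfl, hm, ?_, ?_⟩
    · rintro (_ | i) hi
      · change a ≤ t 0
        omega
      · exact hmono i (by omega)
    · rintro (_ | i) hi
      · change ∃ e, EdgeClose S T p e₀ (c a) e ∧ EdgeClose S T p e₀ (c (t 0)) e
        rwa [h0]
      · exact hcl i (by omega)
  rcases hinv with hap | ⟨e, hae, hbr⟩
  · refine ⟨a + 1, by omega, by omega, ?_, c a • e₀, ?_, ?_⟩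
    · by_cases hp : c (a + 1) • p = p
      · exact Or.inl hp
      obtain ⟨e, he, hbe⟩ := exists_branch hT.connected hp
      refine Or.inr ⟨e, edgeClose_of_cross hadj (hstep' a (by omega)) he ?_, hbe⟩
      rw [hap]
      exact fun h => not_branch_self hT.isAcyclic he (h.mp hbe)
    · exact edgeClose_of_fix he₀ hadj hap
        (by rw [inv_mul_cancel]; exact Or.inr (Or.inr rfl))
    · exact edgeClose_of_fix he₀ hadj hap (hstep' a (by omega))
  · have hex : ∃ d, ¬ Branch T p e (c (a + d) • p) :=
      ⟨r, by rw [har, hn]; exact not_branch_self hT.isAcyclic hae.1⟩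
    classical
    obtain ⟨d, hd, hmin⟩ : ∃ d, ¬ Branch T p e (c (a + d) • p) ∧
        ∀ d' < d, Branch T p e (c (a + d') • p) :=
      ⟨Nat.find hex, Nat.find_spec hex, fun d' h => not_not.mp (Nat.find_min hex h)⟩
    have hdr : d ≤ r := by
      by_contra hlt
      have := hmin r (by omega)
      rw [har, hn] at this
      exact not_branch_self hT.isAcyclic hae.1 this
    obtain _ | d := d
    · exact absurd hbr hd
    have hprev : Branch T p e (c (a + d) • p) := hmin d (by omega)
    rw [← add_assoc] at hd
    refine ⟨a + d + 1, by omega, by omega, ?_, e, hae,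
      edgeClose_of_cross hadj (hstep' _ (by omega)) hae.1 fun h => hd (h.mpr hprev)⟩
    by_cases hp : c (a + d + 1) • p = p
    · exact Or.inl hp
    obtain ⟨e', he', hbe⟩ := exists_branch hT.connected hp
    refine Or.inr ⟨e', edgeClose_of_cross hadj (hstep' _ (by omega)) he' fun h => hd ?_, hbe⟩
    -- The step would start in two branches at once, so they coincide.
    rwa [branch_unique hT.isAcyclic hae.1 he' hprev (h.mp hbe)]

end Action

/-- **Lemma 3.4** (Statement 8, path decomposition).  Given a vertex `p` of `T` with
stabiliser `V`, there are a constant `D_p` and finitely many stabilisers `E₁, …, E_k` of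
edges incident to `p` such that every edge path of `Γ = Cay(G, S)` joining two points of
`V` decomposes as a concatenation `γ₁ ⋯ γ_m` in which the endpoints of each `γ_i` lie in
the `D_p`-neighbourhood of a coset `v_i E_{j_i}` with `v_i ∈ V`. -/
theorem path_decomposition
    {G VT : Type*} [Group G] [MulAction G VT]
    (S : Finset G) (hSgen : Subgroup.closure (S : Set G) = ⊤)
    (T : SimpleGraph VT) (hact : ActsOnTree G T) (p : VT) :
    ∃ (D : ℝ) (k : ℕ) (ed : Fin k → VT), (∀ i, T.Adj p (ed i)) ∧
      ∀ (n : ℕ) (c : ℕ → G), IsEdgePath (wdist (S : Set G)) n c →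
        c 0 ∈ MulAction.stabilizer G p → c n ∈ MulAction.stabilizer G p →
        ∃ (m : ℕ) (t : ℕ → ℕ), 1 ≤ m ∧ t 0 = 0 ∧ t m = n ∧
          (∀ i < m, t i ≤ t (i + 1)) ∧
          ∀ i < m, ∃ v ∈ MulAction.stabilizer G p, ∃ j : Fin k,
            InNbhd (wdist (S : Set G))
              ((fun e => v * e) '' (edgeStab G p (ed j) : Set G)) D (c (t i)) ∧
            InNbhd (wdist (S : Set G))
              ((fun e => v * e) '' (edgeStab G p (ed j) : Set G)) D (c (t (i + 1))) := by
  obtain ⟨hT, hadj, -, hfix, -⟩ := hact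
  obtain ⟨g, hg⟩ : ∃ g : G, g • p ≠ p := by
    by_contra! h
    exact hfix ⟨p, h⟩
  obtain ⟨e₀, he₀, -⟩ := exists_branch hT.connected hg
  obtain ⟨D, k, ed, hed, hcos⟩ := exists_cosets S hT.connected p e₀
  refine ⟨D, k, ed, hed, fun n c hc h0 hn => ?_⟩
  obtain ⟨m, t, hm, ht0, htm, hmono, hcl⟩ :=
    exists_cut hSgen hT hadj he₀ hc hn n 0 (by omega) (Or.inl h0)
  refine ⟨m, t, hm, ht0, htm, hmono, fun i hi => ?_⟩
  obtain ⟨e, hx, hy⟩ := hcl i hi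
  exact hcos _ _ e hx hy

end MorseGoG
end

section
/- Let G be a finitely generated group admitting a minimal, non-elliptic action without inversions on a simplicial tree T, and let p ∈ T be a vertex with stabiliser V. If the stabiliser of every edge of T incident to p is finitely generated and undistorted in G, then V is finitely generated and undistorted in G. -/
/-! Why the vertex stabiliser `V` of `p` is undistorted.  Take `v ∈ V` and a word of length `n` in `S`
representing it, giving a walk `1 = g₀, g₁, …, gₙ = v` in the Cayley graph; its image `gᵢ • p` is a
coarse loop at `p` in the tree.  This loop splits into excursions, each of which leaves `p` along
an edge `{p, b}` and returns through the same edge, since in a tree any passage between the two sides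
of an edge crosses that edge (`dist_crossing`).

A step `gᵢ, gᵢ₊₁ = gᵢ * s` crossing `{p, b}` puts `gᵢ⁻¹ • {p, b}` on the segment `[p, s • p]`.  There
are finitely many letters `s` and each segment is finite, so there are finitely many neighbours
`b₀ ∈ B` of `p` and a radius `R` such that, at every crossing, some `x ∈ V` within `R` of `gᵢ`
satisfies `x • b₀ = b` (`exists_crossing_data`).  If an excursion starts near `x` and ends near `x'`,
then `x⁻¹ * x'` lies in `V` and carries one element of `B` to another, so it belongs to a fixed coset
of an edge stabiliser; undistortion of that edge stabiliser bounds its length linearly in the duration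
of the excursion (`exists_coset_bound`).  Passing from one excursion to the next costs an element of
`V` of `S`-length at most `2 * R + 1`.  Hence `V` is generated by these finitely many short elements
together with finite generating sets of finitely many edge stabilisers and coset representatives, and
the length of `v` in these generators is at most `K * n`.

The bookkeeping is an induction on the word, with invariant `WalkState`.  The coefficient `C` in it
reserves in advance the cost of the edge stabiliser element that closes the current excursion.
-/

open Set Filter Topology
open scoped ENNReal

namespace MorseGoG

/-! ### Balls in word metrics -/

/-- The ball of radius `n` about `1` in the word metric of `S`: products of at most `n` letters
from `S ∪ S⁻¹`.  Unlike `wordLength S g ≤ n`, membership never holds by a junk value when `g` is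
outside the subgroup generated by `S`. -/
def wordBall {H : Type*} [Group H] (S : Set H) (n : ℕ) : Set H :=
  {g | ∃ l : List H, l.length ≤ n ∧ (∀ x ∈ l, x ∈ S ∨ x⁻¹ ∈ S) ∧ l.prod = g}

section WordBall

variable {H : Type*} [Group H] {S S' : Set H} {m n : ℕ} {g h : H}

theorem one_mem_wordBall : (1 : H) ∈ wordBall S n := ⟨[], by simp⟩

theorem wordBall_mono (hS : S ⊆ S') (hn : m ≤ n) : wordBall S m ⊆ wordBall S' n := by
  rintro g ⟨l, hl, hx, rfl⟩
  exact ⟨l, hl.trans hn, fun x h => (hx x h).imp (@hS _) (@hS _), rfl⟩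

theorem mem_wordBall_one (h : g ∈ S ∨ g⁻¹ ∈ S) : g ∈ wordBall S 1 :=
  ⟨[g], by simp, by simpa using h, by simp⟩

theorem mul_mem_wordBall (hg : g ∈ wordBall S m) (hh : h ∈ wordBall S n) :
    g * h ∈ wordBall S (m + n) := by
  obtain ⟨l, hl, hx, rfl⟩ := hg
  obtain ⟨l', hl', hx', rfl⟩ := hh
  refine ⟨l ++ l', by simp; omega, ?_, by simp⟩
  intro x hx2
  rcases List.mem_append.1 hx2 with h | h
  exacts [hx x h, hx' x h]

theorem inv_mem_wordBall (hg : g ∈ wordBall S m) : g⁻¹ ∈ wordBall S m := by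
  obtain ⟨l, hl, hx, rfl⟩ := hg
  refine ⟨(l.map (·⁻¹)).reverse, by simpa using hl, ?_, (List.prod_inv_reverse l).symm⟩
  intro x hx2
  simp only [List.mem_reverse, List.mem_map] at hx2
  obtain ⟨y, hy, rfl⟩ := hx2
  simpa using (hx y hy).symm

theorem exists_mem_wordBall (hS : Subgroup.closure S = ⊤) (g : H) : ∃ n, g ∈ wordBall S n := by
  have hg : g ∈ Subgroup.closure S := hS ▸ Subgroup.mem_top g
  induction hg using Subgroup.closure_induction with
  | mem x hx => exact ⟨1, mem_wordBall_one (Or.inl hx)⟩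
  | one => exact ⟨0, one_mem_wordBall⟩
  | mul x y _ _ hx hy =>
    obtain ⟨m, hm⟩ := hx
    obtain ⟨n, hn⟩ := hy
    exact ⟨m + n, mul_mem_wordBall hm hn⟩
  | inv x _ hx =>
    obtain ⟨m, hm⟩ := hx
    exact ⟨m, inv_mem_wordBall hm⟩

theorem mem_closure_of_mem_wordBall (hg : g ∈ wordBall S n) : g ∈ Subgroup.closure S := by
  obtain ⟨l, -, hx, rfl⟩ := hg
  refine Subgroup.list_prod_mem _ fun x h => ?_
  rcases hx x h with h | h
  · exact Subgroup.subset_closure h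
  · exact (Subgroup.inv_mem_iff _).1 (Subgroup.subset_closure h)

theorem wordLength_le_of_mem (hg : g ∈ wordBall S n) : wordLength S g ≤ n := by
  obtain ⟨l, hl, hx, rfl⟩ := hg
  refine le_trans (Nat.sInf_le ?_) hl
  exact ⟨l, rfl, hx, rfl⟩

theorem mem_wordBall_wordLength (hS : Subgroup.closure S = ⊤) (g : H) :
    g ∈ wordBall S (wordLength S g) := by
  obtain ⟨n, l, -, hx, hp⟩ := exists_mem_wordBall hS g
  have hne : {n : ℕ | ∃ l : List H, l.length = n ∧ (∀ x ∈ l, x ∈ S ∨ x⁻¹ ∈ S) ∧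
      l.prod = g}.Nonempty := ⟨_, l, rfl, hx, hp⟩
  obtain ⟨l', h1, h2, h3⟩ := Nat.sInf_mem hne
  exact ⟨l', h1.le, h2, h3⟩

theorem wordBall_finite (hS : S.Finite) (n : ℕ) : (wordBall S n).Finite := by
  have hS' : (S ∪ S⁻¹).Finite := hS.union hS.inv
  have := hS'.to_subtype
  refine ((List.finite_length_le (S ∪ S⁻¹ : Set H) n).image
    fun l => (l.map Subtype.val).prod).subset ?_
  rintro g ⟨l, hl, hx, rfl⟩
  refine ⟨l.attach.map fun x => (⟨x.1, hx x.1 x.2⟩ : (S ∪ S⁻¹ : Set H)), by simpa using hl, ?_⟩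
  simp [List.map_map, Function.comp_def]

/-- A homomorphism that sends letters into a ball of radius `k` stretches balls by `k`. -/
theorem map_mem_wordBall {K : Type*} [Group K] {R : Set K} {k : ℕ} (φ : H →* K)
    (hφ : ∀ x ∈ S, φ x ∈ wordBall R k) (hg : g ∈ wordBall S n) : φ g ∈ wordBall R (k * n) := by
  obtain ⟨l, hl, hx, rfl⟩ := hg
  refine wordBall_mono subset_rfl (Nat.mul_le_mul_left k hl) ?_
  clear hl
  induction l with
  | nil => simpa using one_mem_wordBall
  | cons a l ih =>
    have ha : φ a ∈ wordBall R k := by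
      rcases hx a (by simp) with h | h
      · exact hφ a h
      · simpa using inv_mem_wordBall (hφ _ h)
    have := mul_mem_wordBall ha (ih fun x h => hx x (by simp [h]))
    simpa [Nat.mul_add, Nat.add_comm] using this

end WordBall

/-! ### Trees -/

section Tree

variable {VT : Type*} {T : SimpleGraph VT}

theorem dist_add_dist_of_mem_support {a b u : VT} (w : T.Walk a b)
    (hw : w.length = T.dist a b) (hu : u ∈ w.support) : T.dist a u + T.dist u b = T.dist a b := by
  classical
  refine le_antisymm ?_ ?_
  · rw [← hw, ← congrArg SimpleGraph.Walk.length (w.take_spec hu), SimpleGraph.Walk.length_append]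
    exact Nat.add_le_add (SimpleGraph.dist_le _) (SimpleGraph.dist_le _)
  · exact SimpleGraph.Reachable.dist_triangle_left ⟨w.takeUntil u hu⟩ b

/-- Paths in a tree are geodesic. -/
theorem length_eq_dist_of_isPath (hT : T.IsTree) {a b : VT} (w : T.Walk a b) (hw : w.IsPath) :
    w.length = T.dist a b := by
  obtain ⟨w', hp, hl⟩ := hT.connected.exists_path_of_dist a b
  have := (hT.isAcyclic.subsingleton_path a b).elim ⟨w, hw⟩ ⟨w', hp⟩
  rw [← hl, congrArg (fun q : T.Path a b => q.1.length) this]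

/-- A geodesic from the side of `b` to the side of `p` runs through the edge `{b, p}`: geodesics
from `q` to `b` and from `p` to `q'` stay on their sides, so joining them along the edge gives a
path. -/
theorem dist_crossing (hT : T.IsTree) {p b q q' : VT} (hadj : T.Adj p b)
    (hq : T.dist q b < T.dist q p) (hq' : ¬ T.dist q' b < T.dist q' p) :
    T.dist q q' = T.dist q b + 1 + T.dist p q' := by
  have hc := hT.connected
  have hq2 : T.dist q' p < T.dist q' b :=
    lt_of_le_of_ne (not_lt.1 hq') (hT.dist_ne_of_adj q' hadj)
  obtain ⟨w₁, h₁, l₁⟩ := hc.exists_path_of_dist q b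
  obtain ⟨w₂, h₂, l₂⟩ := hc.exists_path_of_dist p q'
  have hsep : ∀ u ∈ w₁.support, u ∉ w₂.support := by
    intro u hu1 hu2
    have e1 := dist_add_dist_of_mem_support w₁ l₁ hu1
    have e2 := dist_add_dist_of_mem_support w₂ l₂ hu2
    have t1 : T.dist q p ≤ T.dist q u + T.dist u p := hc.dist_triangle
    have t2 : T.dist b q' ≤ T.dist b u + T.dist u q' := hc.dist_triangle
    rw [T.dist_comm (u := q') (v := p), T.dist_comm (u := q') (v := b)] at hq2
    rw [T.dist_comm (u := p) (v := u)] at e2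
    rw [T.dist_comm (u := b) (v := u)] at t2
    omega
  have hpath : (w₁.append (SimpleGraph.Walk.cons hadj.symm w₂)).IsPath := by
    rw [SimpleGraph.Walk.isPath_def, SimpleGraph.Walk.support_append]
    simp only [SimpleGraph.Walk.support_cons, List.tail_cons]
    exact List.Nodup.append h₁.support_nodup h₂.support_nodup fun u a b => hsep u a b
  rw [← length_eq_dist_of_isPath hT _ hpath, SimpleGraph.Walk.length_append,
    SimpleGraph.Walk.length_cons, l₁, l₂]
  omega

theorem segment_finite (hT : T.IsTree) (a b : VT) :
    {u | T.dist a u + T.dist u b = T.dist a b}.Finite := by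
  obtain ⟨w, hp, -⟩ := hT.connected.exists_path_of_dist a b
  refine w.support.finite_toSet.subset fun u hu => ?_
  obtain ⟨w₁, l₁⟩ := hT.connected.exists_walk_length_eq_dist a u
  obtain ⟨w₂, l₂⟩ := hT.connected.exists_walk_length_eq_dist u b
  have hl : (w₁.append w₂).length = T.dist a b := by
    rw [SimpleGraph.Walk.length_append, l₁, l₂]; exact hu
  have := congrArg Subtype.val ((hT.isAcyclic.subsingleton_path a b).elim
    ⟨w, hp⟩ ⟨_, (w₁.append w₂).isPath_of_length_eq_dist hl⟩)
  simp only at this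
  simp [this]

theorem exists_neighbour_towards (hT : T.IsTree) {p q : VT} (h : q ≠ p) :
    ∃ b, T.Adj p b ∧ T.dist p q = 1 + T.dist b q := by
  obtain ⟨w, hw⟩ := hT.connected.exists_walk_length_eq_dist p q
  cases w with
  | nil => exact absurd rfl h
  | @cons _ b _ hadj w' =>
    refine ⟨b, hadj, ?_⟩
    have h1 := SimpleGraph.dist_le w'
    have h2 : T.dist p q ≤ T.dist p b + T.dist b q := hT.connected.dist_triangle
    rw [SimpleGraph.dist_eq_one_iff_adj.2 hadj] at h2
    rw [SimpleGraph.Walk.length_cons] at hw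
    omega

theorem dist_smul {G : Type*} [Group G] [MulAction G VT] (hT : T.IsTree)
    (hadj : ∀ (g : G) (a b : VT), T.Adj a b → T.Adj (g • a) (g • b)) (g : G) (a b : VT) :
    T.dist (g • a) (g • b) = T.dist a b := by
  have key : ∀ (g : G) (a b : VT), T.dist (g • a) (g • b) ≤ T.dist a b := by
    intro g a b
    obtain ⟨w, hw⟩ := hT.connected.exists_walk_length_eq_dist a b
    let φ : T →g T := ⟨fun v => g • v, fun h => hadj g _ _ h⟩
    rw [← hw, ← SimpleGraph.Walk.length_map φ w]
    exact SimpleGraph.dist_le _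
  refine le_antisymm (key g a b) ?_
  simpa using key g⁻¹ (g • a) (g • b)

end Tree

/-! ### Edges at `p` crossed by a Cayley graph edge -/

section Main

variable {G VT : Type*} [Group G] [MulAction G VT]

/-- Up to the stabiliser of `p`, the edges at `p` crossed by Cayley graph edges are finite in number,
and the group elements realising the identification can be chosen near the crossing.  Translating by
`g⁻¹` moves the edge `{p, b}` into one of the finitely many segments `[p, s • p]`. -/
theorem exists_crossing_data (S : Finset G) (hSgen : Subgroup.closure (S : Set G) = ⊤)
    (T : SimpleGraph VT) (hT : T.IsTree)
    (hadj : ∀ (g : G) (a b : VT), T.Adj a b → T.Adj (g • a) (g • b)) (p : VT) :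
    ∃ (R : ℕ) (B : Finset VT), (∀ b ∈ B, T.Adj p b) ∧
      ∀ (g s : G) (b : VT), (s ∈ S ∨ s⁻¹ ∈ S) → T.Adj p b →
        T.dist (g • p) p + T.dist p ((g * s) • p) = T.dist (g • p) ((g * s) • p) →
        T.dist (g • p) b + T.dist b ((g * s) • p) = T.dist (g • p) ((g * s) • p) →
        ∃ f ∈ wordBall (S : Set G) R, ∃ b₀ ∈ B, (g * f) • p = p ∧ (g * f) • b₀ = b := by
  classical
  set seg : G → Set VT := fun s => {u | T.dist p u + T.dist u (s • p) = T.dist p (s • p)}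
    with hseg
  -- the pairs of vertices lying on a common segment `[p, s • p]`
  set P : Set (VT × VT) := ⋃ s ∈ wordBall (S : Set G) 1, seg s ×ˢ seg s with hP
  have hPfin : P.Finite := (wordBall_finite S.finite_toSet 1).biUnion fun s _ =>
    (segment_finite hT _ _).prod (segment_finite hT _ _)
  set Q : Set (VT × VT) := {e ∈ P | T.Adj e.1 e.2 ∧ ∃ f : G, f • p = e.1} with hQ
  have hQfin : Q.Finite := hPfin.subset fun e he => he.1
  have hex : ∀ e : VT × VT, ∃ f : G, e ∈ Q → f • p = e.1 := by
    intro e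
    by_cases he : e ∈ Q
    · obtain ⟨f, hf⟩ := he.2.2
      exact ⟨f, fun _ => hf⟩
    · exact ⟨1, fun h => absurd h he⟩
  choose F hF using hex
  choose N hN using fun g : G => exists_mem_wordBall hSgen g
  refine ⟨hQfin.toFinset.sup fun e => N (F e),
    hQfin.toFinset.image fun e => (F e)⁻¹ • e.2, ?_, ?_⟩
  · intro b hb
    simp only [Finset.mem_image, Set.Finite.mem_toFinset] at hb
    obtain ⟨e, he, rfl⟩ := hb
    have := hadj (F e)⁻¹ _ _ he.2.1
    rwa [← hF e he, inv_smul_smul] at this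
  · intro g s b hs hpb h1 h2
    have hd := dist_smul hT hadj
    have hmem : (g⁻¹ • p, g⁻¹ • b) ∈ Q := by
      refine ⟨?_, hadj _ _ _ hpb, g⁻¹, rfl⟩
      refine Set.mem_biUnion (mem_wordBall_one hs) ⟨?_, ?_⟩
      · rw [← hd g⁻¹ (g • p) p, ← hd g⁻¹ p ((g * s) • p), ← hd g⁻¹ (g • p) ((g * s) • p)] at h1
        simpa [hseg, mul_smul] using h1
      · rw [← hd g⁻¹ (g • p) b, ← hd g⁻¹ b ((g * s) • p), ← hd g⁻¹ (g • p) ((g * s) • p)] at h2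
        simpa [hseg, mul_smul] using h2
    refine ⟨F (g⁻¹ • p, g⁻¹ • b), wordBall_mono subset_rfl ?_ (hN _), _,
      Finset.mem_image_of_mem _ (hQfin.mem_toFinset.2 hmem), ?_, ?_⟩
    · exact Finset.le_sup (f := fun e => N (F e)) (hQfin.mem_toFinset.2 hmem)
    · rw [mul_smul, hF _ hmem]; simp
    · rw [mul_smul]; simp

/-- Undistortion of the stabiliser of the edge `{p, b}` passes to its coset consisting of the
elements of the stabiliser of `p` that carry `b'` to `b`. -/
theorem exists_coset_bound (S : Finset G) (hSgen : Subgroup.closure (S : Set G) = ⊤) (p b b' : VT)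
    (hb : FGUndistorted (S : Set G) (edgeStab G p b)) :
    ∃ (A : Finset (MulAction.stabilizer G p)) (C : ℕ), ∀ v : MulAction.stabilizer G p,
      (v : G) • b' = b → ∀ m, (v : G) ∈ wordBall (S : Set G) m →
        v ∈ wordBall (A : Set (MulAction.stabilizer G p)) (C * m + C) := by
  classical
  by_cases hq : ∃ q : MulAction.stabilizer G p, (q : G) • b' = b
  swap
  · exact ⟨∅, 0, fun v hv => absurd ⟨v, hv⟩ hq⟩
  obtain ⟨q, hq⟩ := hq
  obtain ⟨A, hA, C, hC1, hC⟩ := hb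
  have hle : edgeStab G p b ≤ MulAction.stabilizer G p := inf_le_left
  set φ := Subgroup.inclusion hle
  obtain ⟨k, hk⟩ := exists_mem_wordBall hSgen (q : G)
  obtain ⟨D, hD⟩ := exists_nat_ge C
  refine ⟨insert q (A.image φ), D * (k + 1) + D + 1, fun v hv m hm => ?_⟩
  have hvq : (v : G) * (q : G)⁻¹ ∈ edgeStab G p b := by
    refine ⟨(v * q⁻¹).2, ?_⟩
    change ((v : G) * (q : G)⁻¹) • b = b
    rw [mul_smul, ← hq, inv_smul_smul, hv, hq]
  set e : edgeStab G p b := ⟨_, hvq⟩ with he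
  have hlenS : wordLength (S : Set G) (e : G) ≤ m + k :=
    wordLength_le_of_mem (mul_mem_wordBall hm (inv_mem_wordBall hk))
  have hlen : wordLength (A : Set (edgeStab G p b)) e ≤ D * (m + k) + D := by
    have h := (hC 1 e).1
    simp only [wdist, inv_one, one_mul, OneMemClass.coe_one] at h
    have h2 : ((wordLength (S : Set G) (e : G) : ℕ) : ℝ) ≤ ((m + k : ℕ) : ℝ) := by
      exact_mod_cast hlenS
    have h3 : C * (wordLength (S : Set G) (e : G) : ℝ) ≤ D * ((m + k : ℕ) : ℝ) :=
      mul_le_mul hD h2 (by positivity) (by positivity)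
    have h4 : (wordLength (A : Set (edgeStab G p b)) e : ℝ) ≤ ((D * (m + k) + D : ℕ) : ℝ) := by
      push_cast at h3 ⊢
      linarith
    exact_mod_cast h4
  have hball := map_mem_wordBall (R := ((insert q (A.image φ) : Finset _) :
      Set (MulAction.stabilizer G p))) (k := 1) φ
      (fun x hx => mem_wordBall_one (Or.inl (by
        simp only [Finset.coe_insert, Finset.coe_image]
        exact Or.inr ⟨x, hx, rfl⟩))) (mem_wordBall_wordLength hA e)
  have hv2 : v = φ e * q := by
    apply Subtype.ext
    simp [φ, he]
  rw [hv2]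
  refine wordBall_mono subset_rfl ?_
    (mul_mem_wordBall hball (mem_wordBall_one (Or.inl (by simp))))
  nlinarith [Nat.zero_le (D * k * m), Nat.zero_le (D * m), Nat.zero_le m]

/-- If lengths of elements of `V` with respect to a finite set `A` are bounded linearly by their
`S`-lengths, then `A` generates `V` and `V` is undistorted; the opposite inequality is automatic. -/
theorem fgUndistorted_of_bound (S : Finset G) (hSgen : Subgroup.closure (S : Set G) = ⊤)
    (V : Subgroup G) (A : Finset V) (K : ℕ)
    (h : ∀ (v : V) (n : ℕ), (v : G) ∈ wordBall (S : Set G) n → v ∈ wordBall (A : Set V) (K * n)) :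
    FGUndistorted (S : Set G) V := by
  classical
  have hgen : Subgroup.closure (A : Set V) = ⊤ := by
    refine eq_top_iff.2 fun v _ => ?_
    exact mem_closure_of_mem_wordBall (h v _ (mem_wordBall_wordLength hSgen _))
  choose N hN using fun g : G => exists_mem_wordBall hSgen g
  set M := A.sup fun x => N (x : G) with hM
  refine ⟨A, hgen, (K + M + 1 : ℕ), by norm_cast; omega, fun x y => ?_⟩
  have h1 : wordLength (A : Set V) (x⁻¹ * y) ≤ K * wordLength (S : Set G) ((x : G)⁻¹ * y) :=
    wordLength_le_of_mem (h (x⁻¹ * y) _ (mem_wordBall_wordLength hSgen _))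
  have h2 : wordLength (S : Set G) ((x : G)⁻¹ * y) ≤ M * wordLength (A : Set V) (x⁻¹ * y) :=
    wordLength_le_of_mem (map_mem_wordBall V.subtype
      (fun a ha => wordBall_mono subset_rfl (Finset.le_sup (f := fun x : V => N (x : G)) ha)
        (hN (a : G))) (mem_wordBall_wordLength hgen (x⁻¹ * y)))
  unfold wdist
  constructor
  · exact_mod_cast h1.trans (by nlinarith)
  · exact_mod_cast h2.trans (by nlinarith)

/-- The state of a walk in the Cayley graph that has reached `g`.  Either `g` stabilises `p` and has
`A`-length at most `n`, or `g • p` lies beyond an edge `{p, x • b₀}` with `b₀ ∈ B` and `x` in the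
stabiliser of `p`, where a bound `j` on the `A`-length of `x` and a bound `m` on the `S`-distance
from `x` to `g` satisfy `j + C * m ≤ n`. -/
def WalkState (S : Finset G) (T : SimpleGraph VT) (p : VT) (B : Finset VT)
    (A : Set (MulAction.stabilizer G p)) (C n : ℕ) (g : G) : Prop :=
  (∃ x : MulAction.stabilizer G p, (x : G) = g ∧ x ∈ wordBall A n) ∨
  ∃ x : MulAction.stabilizer G p, ∃ b₀ ∈ B,
    T.dist (g • p) ((x : G) • b₀) < T.dist (g • p) p ∧
    ∃ m j : ℕ, (x : G)⁻¹ * g ∈ wordBall (S : Set G) m ∧ x ∈ wordBall A j ∧ j + C * m ≤ n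

end Main

/-- **Lemma 3.5** (Statement 9).  If every edge of `T` incident to the vertex `p` has
finitely generated stabiliser undistorted in `G`, then the vertex stabiliser `V` is
finitely generated and undistorted in `G`. -/
theorem vertex_group_undistorted
    {G VT : Type*} [Group G] [MulAction G VT]
    (S : Finset G) (hSgen : Subgroup.closure (S : Set G) = ⊤)
    (T : SimpleGraph VT) (hact : ActsOnTree G T) (p : VT)
    (hedge : ∀ b : VT, T.Adj p b → FGUndistorted (S : Set G) (edgeStab G p b)) :
    FGUndistorted (S : Set G) (MulAction.stabilizer G p) := by
  classical
  obtain ⟨hT, hadj, -⟩ := hact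
  have hc := hT.connected
  obtain ⟨R, B, hB, hcross⟩ := exists_crossing_data S hSgen T hT hadj p
  have hcoset : ∀ b b' : VT, ∃ (A : Finset (MulAction.stabilizer G p)) (C : ℕ), b ∈ B →
      ∀ v : MulAction.stabilizer G p, (v : G) • b' = b → ∀ m, (v : G) ∈ wordBall (S : Set G) m →
        v ∈ wordBall (A : Set (MulAction.stabilizer G p)) (C * m + C) := by
    intro b b'
    by_cases hb : b ∈ B
    · obtain ⟨A, C, h⟩ := exists_coset_bound S hSgen p b b' (hedge b (hB b hb))
      exact ⟨A, C, fun _ => h⟩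
    · exact ⟨∅, 0, fun h => absurd h hb⟩
  choose A₀ C₀ hA₀ using hcoset
  -- the ball of radius `2 * R + 1` contains the corrections made at the crossings
  have hfin : {v : MulAction.stabilizer G p | (v : G) ∈ wordBall (S : Set G) (2 * R + 1)}.Finite :=
    (wordBall_finite S.finite_toSet _).preimage Subtype.val_injective.injOn
  set A : Finset (MulAction.stabilizer G p) :=
    ((B ×ˢ B).biUnion fun e => A₀ e.1 e.2) ∪ hfin.toFinset with hA
  set C : ℕ := (B ×ˢ B).sup fun e => C₀ e.1 e.2 with hC
  have hnear : ∀ v : MulAction.stabilizer G p, (v : G) ∈ wordBall (S : Set G) (2 * R + 1) →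
      v ∈ wordBall (A : Set (MulAction.stabilizer G p)) 1 := fun v hv =>
    mem_wordBall_one (Or.inl (by
      simp only [hA, Finset.coe_union, Set.Finite.coe_toFinset]
      exact Or.inr hv))
  have hfar : ∀ b ∈ B, ∀ b' ∈ B, ∀ v : MulAction.stabilizer G p, (v : G) • b' = b →
      ∀ m, (v : G) ∈ wordBall (S : Set G) m →
        v ∈ wordBall (A : Set (MulAction.stabilizer G p)) (C * m + C) := by
    intro b hb b' hb' v hv m hm
    have hmem : (b, b') ∈ B ×ˢ B := Finset.mk_mem_product hb hb'
    have hle : C₀ b b' ≤ C := Finset.le_sup (f := fun e : VT × VT => C₀ e.1 e.2) hmem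
    refine wordBall_mono ?_ ?_ (hA₀ b b' hb v hv m hm)
    · intro x hx
      simp only [hA, Finset.coe_union, Finset.coe_biUnion]
      exact Or.inl (Set.mem_biUnion (x := (b, b')) hmem hx)
    · exact Nat.add_le_add (Nat.mul_le_mul_right _ hle) hle
  -- closing an excursion overspends the budget by `C * R + C`, opening a new one costs
  -- `1 + C * (R + 1)`
  set K : ℕ := 2 * C * R + 2 * C + 1 with hK
  have hstep : ∀ (x : MulAction.stabilizer G p) (g f s : G) (j n : ℕ), (s ∈ S ∨ s⁻¹ ∈ S) →
      (x : G) = g * f → f ∈ wordBall (S : Set G) R →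
      x ∈ wordBall (A : Set (MulAction.stabilizer G p)) j →
      T.dist (g • p) p + T.dist p ((g * s) • p) = T.dist (g • p) ((g * s) • p) →
      j + 1 + C * (R + 1) ≤ n →
      WalkState S T p B (A : Set (MulAction.stabilizer G p)) C n (g * s) := by
    intro x g f s j n hs hx hf hxj hd hn
    by_cases hp : (g * s) • p = p
    · refine Or.inl ⟨⟨g * s, hp⟩, rfl, ?_⟩
      have h1 : x⁻¹ * ⟨g * s, hp⟩ ∈ wordBall (A : Set (MulAction.stabilizer G p)) 1 := by
        refine hnear _ ?_
        have h2 : ((x⁻¹ * ⟨g * s, hp⟩ : MulAction.stabilizer G p) : G) = f⁻¹ * s := by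
          simp [hx, mul_assoc]
        rw [h2]
        exact wordBall_mono subset_rfl (by omega)
          (mul_mem_wordBall (inv_mem_wordBall hf) (mem_wordBall_one hs))
      have h3 := mul_mem_wordBall hxj h1
      rw [mul_inv_cancel_left] at h3
      exact wordBall_mono subset_rfl (by omega) h3
    · obtain ⟨b, hpb, hbd⟩ := exists_neighbour_towards hT hp
      have hd2 : T.dist (g • p) b + T.dist b ((g * s) • p) = T.dist (g • p) ((g * s) • p) := by
        have t1 : T.dist (g • p) b ≤ T.dist (g • p) p + T.dist p b := hc.dist_triangle
        have t2 : T.dist (g • p) ((g * s) • p) ≤ T.dist (g • p) b + T.dist b ((g * s) • p) :=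
          hc.dist_triangle
        rw [SimpleGraph.dist_eq_one_iff_adj.2 hpb] at t1
        omega
      obtain ⟨f', hf', b₀, hb₀, hgp, hgb⟩ := hcross g s b hs hpb hd hd2
      refine Or.inr ⟨⟨g * f', hgp⟩, b₀, hb₀, ?_, R + 1, j + 1, ?_, ?_, hn⟩
      · change T.dist _ ((g * f') • b₀) < _
        rw [hgb, T.dist_comm, T.dist_comm (u := (g * s) • p)]
        omega
      · have h2 : (g * f')⁻¹ * (g * s) = f'⁻¹ * s := by group
        change (g * f')⁻¹ * (g * s) ∈ _
        rw [h2]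
        exact mul_mem_wordBall (inv_mem_wordBall hf') (mem_wordBall_one hs)
      · have h1 : x⁻¹ * ⟨g * f', hgp⟩ ∈ wordBall (A : Set (MulAction.stabilizer G p)) 1 := by
          refine hnear _ ?_
          have h2 : ((x⁻¹ * ⟨g * f', hgp⟩ : MulAction.stabilizer G p) : G) = f⁻¹ * f' := by
            simp [hx, mul_assoc]
          rw [h2]
          exact wordBall_mono subset_rfl (by omega) (mul_mem_wordBall (inv_mem_wordBall hf) hf')
        have h3 := mul_mem_wordBall hxj h1
        rwa [mul_inv_cancel_left] at h3
  have hwalk : ∀ l : List G, (∀ s ∈ l, s ∈ S ∨ s⁻¹ ∈ S) →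
      WalkState S T p B (A : Set (MulAction.stabilizer G p)) C (K * l.length) l.prod := by
    intro l
    induction l using List.reverseRecOn with
    | nil => exact fun _ => Or.inl ⟨1, by simp, one_mem_wordBall⟩
    | append_singleton l s ih =>
      intro hl
      have hs : s ∈ S ∨ s⁻¹ ∈ S := hl s (by simp)
      have ih := ih fun x hx => hl x (by simp [hx])
      rw [List.prod_append, List.prod_singleton, List.length_append, List.length_singleton]
      set g := l.prod
      set k := l.length
      have hKk : K * (k + 1) = K * k + (2 * (C * R) + 2 * C + 1) := by rw [hK]; ring
      have hCR : C * (R + 1) = C * R + C := by ring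
      rcases ih with ⟨x, hx, hxk⟩ | ⟨x, b₀, hb₀, hside, m, j, hm, hj, hle⟩
      · have hgp : g • p = p := hx ▸ x.2
        refine hstep x g 1 s _ _ hs (by simp [hx]) one_mem_wordBall hxk ?_ ?_
        · rw [hgp]; simp
        · omega
      · by_cases hstay : T.dist ((g * s) • p) ((x : G) • b₀) < T.dist ((g * s) • p) p
        · refine Or.inr ⟨x, b₀, hb₀, hstay, m + 1, j, ?_, hj, ?_⟩
          · rw [← mul_assoc]
            exact mul_mem_wordBall hm (mem_wordBall_one hs)
          · rw [hKk, Nat.mul_add, Nat.mul_one]; omega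
        · have hxp : (x : G) • p = p := x.2
          have hpb : T.Adj p ((x : G) • b₀) := by
            have := hadj (x : G) _ _ (hB b₀ hb₀)
            rwa [hxp] at this
          have hcr := dist_crossing hT hpb hside hstay
          have t1 : T.dist (g • p) p ≤ T.dist (g • p) ((x : G) • b₀) + T.dist ((x : G) • b₀) p :=
            hc.dist_triangle
          have t2 : T.dist (g • p) ((g * s) • p) ≤ T.dist (g • p) p + T.dist p ((g * s) • p) :=
            hc.dist_triangle
          have t3 : T.dist ((x : G) • b₀) ((g * s) • p)
              ≤ T.dist ((x : G) • b₀) p + T.dist p ((g * s) • p) := hc.dist_triangle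
          have t4 : T.dist (g • p) ((g * s) • p) ≤ T.dist (g • p) ((x : G) • b₀)
              + T.dist ((x : G) • b₀) ((g * s) • p) := hc.dist_triangle
          rw [SimpleGraph.dist_eq_one_iff_adj.2 hpb.symm] at t1 t3
          obtain ⟨f, hf, b₁, hb₁, hgp, hgb⟩ :=
            hcross g s _ hs hpb (by omega) (by omega)
          have hmove : (x⁻¹ * ⟨g * f, hgp⟩ : MulAction.stabilizer G p) ∈
              wordBall (A : Set (MulAction.stabilizer G p)) (C * (m + R) + C) := by
            refine hfar b₀ hb₀ b₁ hb₁ _ ?_ _ ?_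
            · change ((x : G)⁻¹ * (g * f)) • b₁ = b₀
              rw [mul_smul, hgb, inv_smul_smul]
            · change (x : G)⁻¹ * (g * f) ∈ _
              rw [← mul_assoc]
              exact mul_mem_wordBall hm hf
          have h3 := mul_mem_wordBall hj hmove
          rw [mul_inv_cancel_left] at h3
          refine hstep _ g f s _ _ hs rfl hf h3 (by omega) ?_
          rw [hKk, hCR, Nat.mul_add C m R]
          omega
  refine fgUndistorted_of_bound S hSgen _ A K ?_
  rintro v n ⟨l, hln, hl, hprod⟩
  refine wordBall_mono subset_rfl (Nat.mul_le_mul_left K hln) ?_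
  rcases hwalk l hl with ⟨x, hx, hxl⟩ | ⟨x, b₀, -, hside, -⟩
  · rwa [show v = x from Subtype.ext (by rw [hx, hprod])]
  · rw [hprod, show (v : G) • p = p from v.2] at hside
    simp at hside

end MorseGoG
end
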